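/- For n ≥ 4 and S any compact surface, the quotient P_n(S)/Z(P_n(S)) of the pure braid group of S by its center is infinite. -/

import Mathlib

set_option linter.unusedSectionVars false

open Complex in
theorem PB.sin_ne_iff (z : ℂ) : Complex.sin z ≠ 0 ↔ (Complex.cos z ≠ 1 ∧ Complex.cos z ≠ -1) := by
  have h := Complex.sin_sq_add_cos_sq z
  rw [← not_or, ← sq_eq_one_iff, not_iff_not]
  constructor
  · intro h0; rw [h0] at h; simpa using h
  · intro h0; rw [h0] at h; simpa using h

namespace PB

theorem infinite_of_pows {G : Type*} [Group G] (a b : G) (h : ∀ k : ℕ, 0 < k → a ^ k * b ≠ b * a ^ k) :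
    Infinite (G ⧸ Subgroup.center G) := by
  refine Infinite.of_injective (fun k : ℕ => ((a ^ k : G) : G ⧸ Subgroup.center G)) ?_
  have key : ∀ m n : ℕ, m < n → ((a ^ m : G) : G ⧸ Subgroup.center G) ≠ ((a ^ n : G) : G ⧸ Subgroup.center G) := by
    intro m n hmn he
    rw [QuotientGroup.eq, ← inv_pow] at he
    have : a⁻¹ ^ m * a ^ n = a ^ (n - m) := by
      rw [inv_pow, inv_mul_eq_iff_eq_mul, ← pow_add]; congr 1; omega
    rw [this, Subgroup.mem_center_iff] at he
    exact h _ (by omega) (he b).symm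
  intro m n he
  rcases lt_trichotomy m n with hl | hl | hl
  · exact (key _ _ hl he).elim
  · exact hl
  · exact (key _ _ hl he.symm).elim

abbrev Xc := {w : ℂ // w ≠ 1 ∧ w ≠ -1}
abbrev Ec := {z : ℂ // Complex.sin z ≠ 0}

noncomputable def cosm (z : Ec) : Xc := ⟨Complex.cos z.1, (sin_ne_iff z.1).1 z.2⟩

theorem sin_shift (z : ℂ) (i : ℤ) : Complex.sin (z + 2 * Real.pi * i) = Complex.sin z := by
  have := Complex.sin_add_int_mul_two_pi z i
  rw [← this]; congr 1; ring
theorem cos_shift (z : ℂ) (i : ℤ) : Complex.cos (z + 2 * Real.pi * i) = Complex.cos z := by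
  have := Complex.cos_add_int_mul_two_pi z i
  rw [← this]; congr 1; ring

noncomputable def cz (i : ZMod 0) : ℂ := ((show ℤ from i : ℤ) : ℂ)
theorem cz_add (i j : ZMod 0) : cz (i + j) = cz i + cz j := Int.cast_add (R := ℂ) i j
theorem cz_sub (i j : ZMod 0) : cz (i - j) = cz i - cz j := Int.cast_sub (R := ℂ) i j

def zz (k : ℤ) : ZMod 0 := k
theorem cz_zz (k : ℤ) : cz (zz k) = k := rfl
theorem exists_zz (i : ZMod 0) : ∃ k : ℤ, i = zz k := ⟨i, rfl⟩

noncomputable def dact : DihedralGroup 0 → Ec → Ec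
  | .r i, z => ⟨z.1 + 2 * Real.pi * cz i, by unfold cz; rw [sin_shift]; exact z.2⟩
  | .sr i, z => ⟨-(z.1 + 2 * Real.pi * cz i), by unfold cz; rw [Complex.sin_neg, sin_shift]; simpa using z.2⟩

noncomputable instance : MulAction (DihedralGroup 0) Ec where
  smul := dact
  one_smul z := by
    change dact (DihedralGroup.r 0) z = z
    apply Subtype.ext
    change z.1 + 2 * Real.pi * ((0 : ℤ) : ℂ) = z.1
    simp
  mul_smul g h z := by
    change dact _ z = dact _ (dact _ z)
    rcases g with i | i <;> rcases h with j | j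
    · rw [DihedralGroup.r_mul_r]; apply Subtype.ext; simp only [dact, cz_add]; ring
    · rw [DihedralGroup.r_mul_sr]; apply Subtype.ext; simp only [dact, cz_sub]; ring
    · rw [DihedralGroup.sr_mul_r]; apply Subtype.ext; simp only [dact, cz_add]; ring
    · rw [DihedralGroup.sr_mul_sr]; apply Subtype.ext; simp only [dact, cz_sub]; ring

theorem r_smul (i : ZMod 0) (z : Ec) : ((DihedralGroup.r i • z : Ec) : ℂ) = z.1 + 2 * Real.pi * cz i := rfl
theorem sr_smul (i : ZMod 0) (z : Ec) : ((DihedralGroup.sr i • z : Ec) : ℂ) = -(z.1 + 2 * Real.pi * cz i) := rfl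

theorem cosm_cont : Continuous cosm :=
  Continuous.subtype_mk (Complex.continuous_cos.comp continuous_subtype_val) _

theorem cosm_open : IsOpenMap cosm := by
  rw [isOpenMap_iff_nhds_le]
  intro z
  have hd : HasStrictDerivAt Complex.cos (-Complex.sin z.1) z.1 := Complex.hasStrictDerivAt_cos z.1
  have h1 := hd.map_nhds_eq (by simpa using z.2)
  have ho : IsOpen {z : ℂ | Complex.sin z ≠ 0} := isOpen_ne_fun Complex.continuous_sin continuous_const
  have h2 : Filter.map Subtype.val (nhds z) = nhds z.1 := ho.isOpenEmbedding_subtypeVal.map_nhds_eq z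
  have ind : Topology.IsInducing (Subtype.val : Xc → ℂ) := Topology.IsInducing.subtypeVal
  have h3 : nhds (cosm z).1 = Filter.map Subtype.val (Filter.map cosm (nhds z)) := by
    change nhds (Complex.cos z.1) = _
    rw [← h1, ← h2, Filter.map_map, Filter.map_map]; rfl
  rw [ind.nhds_eq_comap, h3, Filter.comap_map Subtype.val_injective]

theorem cosm_surj : Function.Surjective cosm := by
  intro w
  obtain ⟨z, hz⟩ := Complex.cos_surjective w.1
  exact ⟨⟨z, (sin_ne_iff z).2 (hz ▸ w.2)⟩, Subtype.ext hz⟩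

theorem cosm_qcov : IsQuotientCoveringMap cosm (DihedralGroup 0) where
  toIsQuotientMap := cosm_open.isQuotientMap cosm_cont cosm_surj
  continuous_const_smul g := by
    rcases g with i | i
    · exact Continuous.subtype_mk (by fun_prop) _
    · exact Continuous.subtype_mk (by fun_prop) _
  apply_eq_iff_mem_orbit {e₁ e₂} := by
    rw [MulAction.mem_orbit_iff, ← Subtype.coe_injective.eq_iff]
    change Complex.cos e₁.1 = Complex.cos e₂.1 ↔ _
    rw [Complex.cos_eq_cos_iff]
    constructor
    · rintro ⟨k, h | h⟩
      · refine ⟨.r (zz (-k)), Subtype.ext ?_⟩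
        rw [r_smul, h, cz_zz]; push_cast; ring
      · refine ⟨.sr (zz (-k)), Subtype.ext ?_⟩
        rw [sr_smul, h, cz_zz]; push_cast; ring
    · rintro ⟨g, rfl⟩
      rcases g with i | i
      · obtain ⟨k, hk⟩ := exists_zz i
        refine ⟨-k, Or.inl ?_⟩
        rw [r_smul, hk, cz_zz]; push_cast; ring
      · obtain ⟨k, hk⟩ := exists_zz i
        refine ⟨-k, Or.inr ?_⟩
        rw [sr_smul, hk, cz_zz]; push_cast; ring
  disjoint e := by
    have ho : IsOpen {z : ℂ | Complex.sin z ≠ 0} := isOpen_ne_fun Complex.continuous_sin continuous_const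
    obtain ⟨r, hr, hb⟩ := Metric.isOpen_iff.1 ho e.1 e.2
    have hs : 0 < min r 1 := lt_min hr one_pos
    refine ⟨Subtype.val ⁻¹' Metric.ball e.1 (min r 1), continuous_subtype_val.continuousAt.preimage_mem_nhds (Metric.ball_mem_nhds _ hs), ?_⟩
    rintro g ⟨y, ⟨x, hx, hxy⟩, hy⟩
    have hx' : dist x.1 e.1 < min r 1 := hx
    have hy' : dist y.1 e.1 < min r 1 := hy
    rcases g with i | i
    · have h1 : y.1 = x.1 + 2 * Real.pi * cz i := by rw [← hxy]; rfl
      have h2 : dist y.1 x.1 < 2 := by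
        have := dist_triangle_right y.1 x.1 e.1
        have := min_le_right r 1
        linarith
      rw [h1, dist_eq_norm] at h2
      have h3 : ‖(x.1 + 2 * Real.pi * cz i - x.1 : ℂ)‖ = 2 * Real.pi * |((show ℤ from i : ℤ) : ℝ)| := by
        unfold cz
        rw [add_sub_cancel_left, norm_mul, norm_mul, Complex.norm_intCast]
        simp [abs_of_pos Real.pi_pos]
      rw [h3] at h2
      by_contra hne
      have hi : (show ℤ from i) ≠ 0 := by
        intro h0; apply hne; rw [show i = 0 from h0]; rfl
      have : (1 : ℝ) ≤ |((show ℤ from i : ℤ) : ℝ)| := by exact_mod_cast Int.one_le_abs hi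
      have := Real.pi_gt_three
      nlinarith
    · exfalso
      have h1 : y.1 = -(x.1 + 2 * Real.pi * cz i) := by rw [← hxy]; rfl
      have hm : midpoint ℝ x.1 y.1 ∈ Metric.ball e.1 (min r 1) :=
        (convex_ball e.1 (min r 1)).midpoint_mem hx' hy'
      have h2 := hb (Metric.ball_subset_ball (min_le_left _ _) hm)
      apply h2
      obtain ⟨k, hk⟩ := exists_zz i
      have : midpoint ℝ x.1 y.1 = ((-k : ℤ) : ℂ) * Real.pi := by
        rw [midpoint_eq_smul_add, h1, Complex.real_smul, hk, cz_zz]; push_cast; norm_num; ring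
      rw [this, Complex.sin_int_mul_pi]

/-- base angle -/
noncomputable def th0 : Ec := ⟨Complex.I, by
  rw [Complex.sin_ne_zero_iff]; intro k h
  have := congrArg Complex.im h
  simp at this⟩

noncomputable def x0 : Xc := cosm th0

theorem sinne_im (z : ℂ) (h : z.im ≠ 0) : Complex.sin z ≠ 0 := by
  rw [Complex.sin_ne_zero_iff]; rintro k rfl
  simp at h

theorem cosne_im (z : ℂ) (h : z.im ≠ 0) : Complex.cos z ≠ 0 := by
  rw [Complex.cos_ne_zero_iff]; rintro k rfl
  apply h
  have : ((2 * k + 1) * Real.pi / 2 : ℂ) = (((2 * k + 1) * Real.pi / 2 : ℝ) : ℂ) := by push_cast; rfl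
  rw [this, Complex.ofReal_im]

theorem norm_one_trig (z : ℂ) (h : ‖z‖ = 1) : Complex.sin z ≠ 0 ∧ Complex.cos z ≠ 0 := by
  by_cases hi : z.im = 0
  · have hz : z = (z.re : ℂ) := Complex.ext rfl (by simp [hi])
    rw [hz, Complex.norm_real, Real.norm_eq_abs] at h
    have hp := Real.pi_gt_three
    rcases (abs_eq zero_le_one).1 h with h | h
    · rw [hz, h, ← Complex.ofReal_sin, ← Complex.ofReal_cos]
      exact ⟨by exact_mod_cast (Real.sin_pos_of_pos_of_lt_pi one_pos (by linarith)).ne', by exact_mod_cast (Real.cos_one_pos).ne'⟩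
    · rw [hz, h, ← Complex.ofReal_sin, ← Complex.ofReal_cos, Real.sin_neg, Real.cos_neg]
      exact ⟨by exact_mod_cast (neg_neg_of_pos (Real.sin_pos_of_pos_of_lt_pi one_pos (by linarith))).ne, by exact_mod_cast (Real.cos_one_pos).ne'⟩
  · exact ⟨sinne_im z hi, cosne_im z hi⟩

noncomputable def la (t : unitInterval) : ℂ := Complex.I + 2 * Real.pi * ((t : ℝ) : ℂ)
noncomputable def lb (t : unitInterval) : ℂ := Complex.exp (((Real.pi / 2 - Real.pi * (t : ℝ) : ℝ) : ℂ) * Complex.I)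

theorem la_im (t) : (la t).im = 1 := by simp [la]
theorem lb_norm (t) : ‖lb t‖ = 1 := Complex.norm_exp_ofReal_mul_I _

noncomputable def lA : Path th0 (DihedralGroup.r (1 : ZMod 0) • th0) where
  toFun t := ⟨la t, sinne_im _ (by rw [la_im]; exact one_ne_zero)⟩
  continuous_toFun := Continuous.subtype_mk (by unfold la; fun_prop) _
  source' := Subtype.ext (by simp [la, th0])
  target' := Subtype.ext (by
    rw [r_smul]; change la 1 = Complex.I + 2 * Real.pi * ((1 : ℤ) : ℂ); simp [la])

noncomputable def lB : Path th0 (DihedralGroup.sr (0 : ZMod 0) • th0) where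
  toFun t := ⟨lb t, (norm_one_trig _ (lb_norm t)).1⟩
  continuous_toFun := Continuous.subtype_mk (by unfold lb; fun_prop) _
  source' := Subtype.ext (by
    change lb 0 = Complex.I
    simp only [lb, Set.Icc.coe_zero, mul_zero, sub_zero]; push_cast; exact Complex.exp_pi_div_two_mul_I)
  target' := Subtype.ext (by
    rw [sr_smul]; change lb 1 = -(Complex.I + 2 * Real.pi * ((0 : ℤ) : ℂ))
    have : ((Real.pi / 2 - Real.pi * 1 : ℝ) : ℂ) * Complex.I = -(Real.pi / 2 * Complex.I) := by push_cast; ring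
    simp only [lb, Set.Icc.coe_one, this, Complex.exp_neg, Complex.exp_pi_div_two_mul_I]
    simp)

noncomputable def pA : Path x0 x0 :=
  (lA.map cosm_cont).cast rfl (cosm_qcov.map_smul _).symm
noncomputable def pB : Path x0 x0 :=
  (lB.map cosm_cont).cast rfl (cosm_qcov.map_smul _).symm

noncomputable def cA : FundamentalGroup Xc x0 := Path.Homotopic.Quotient.mk pA
noncomputable def cB : FundamentalGroup Xc x0 := Path.Homotopic.Quotient.mk pB

noncomputable def rho : FundamentalGroup Xc x0 →* (DihedralGroup 0)ᵐᵒᵖ :=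
  cosm_qcov.fundamentalGroupToMulOpposite ⟨th0, rfl⟩

theorem rho_of (g : DihedralGroup 0) (l : Path th0 (g • th0)) :
    rho (Path.Homotopic.Quotient.mk ((l.map cosm_cont).cast rfl (cosm_qcov.map_smul _).symm)) = MulOpposite.op g := by
  unfold rho
  rw [IsQuotientCoveringMap.fundamentalGroupToMulOpposite_apply_eq_Iff]
  have := cosm_qcov.isCoveringMap.monodromy_eq_of_map_eq (x := x0) (y := x0)
    (γ := Path.Homotopic.Quotient.mk ((l.map cosm_cont).cast rfl (cosm_qcov.map_smul _).symm))
    (ex := ⟨th0, rfl⟩) (ey := ⟨g • th0, cosm_qcov.map_smul g⟩) (Path.Homotopic.Quotient.mk l) (by rfl)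
  rw [this]; rfl

theorem not_comm (k : ℕ) (hk : 0 < k) : ¬ Commute (cA ^ k * cB * (cA ^ k)⁻¹ * cB⁻¹) cB := by
  intro h
  have h2 := h.map rho
  have hA : rho cA = MulOpposite.op (.r 1) := rho_of _ lA
  have hB : rho cB = MulOpposite.op (.sr 0) := rho_of _ lB
  simp only [map_mul, map_inv, map_pow, hA, hB] at h2
  rw [← MulOpposite.op_pow, DihedralGroup.r_one_pow] at h2
  have h3 := congrArg MulOpposite.unop h2.eq
  simp only [MulOpposite.unop_mul, MulOpposite.unop_inv, MulOpposite.unop_op,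
    DihedralGroup.inv_r, DihedralGroup.inv_sr, DihedralGroup.r_mul_r, DihedralGroup.r_mul_sr, DihedralGroup.sr_mul_r, DihedralGroup.sr_mul_sr, DihedralGroup.sr.injEq] at h3
  have h4 := congrArg cz h3
  have h0 : cz 0 = 0 := Int.cast_zero (R := ℂ)
  have hk' : cz (k : ZMod 0) = (k : ℂ) := by
    have : cz (k : ZMod 0) = ((k : ℤ) : ℂ) := rfl
    rw [this]; simp
  have hneg : ∀ i, cz (-i) = - cz i := fun i => by rw [← zero_sub, cz_sub, h0, zero_sub]
  simp only [cz_add, cz_sub, hneg, h0, hk'] at h4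
  ring_nf at h4
  have : (k : ℂ) = 0 := by linear_combination (1 / 4 : ℂ) * h4
  exact hk.ne' (by exact_mod_cast this)

end PB

namespace PB
open Topology

noncomputable def bump (x : ℂ) : ℝ := max 0 (1 - ‖x‖)
theorem bump_lip (x y : ℂ) : |bump x - bump y| ≤ ‖x - y‖ := by
  have h1 : |max 0 (1 - ‖x‖) - max 0 (1 - ‖y‖)| ≤ |(1 - ‖x‖) - (1 - ‖y‖)| := by
    have := abs_max_sub_max_le_max 0 (1 - ‖x‖) 0 (1 - ‖y‖)
    simpa using this
  refine h1.trans ?_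
  have : (1 - ‖x‖) - (1 - ‖y‖) = ‖y‖ - ‖x‖ := by ring
  rw [this, norm_sub_rev]
  exact abs_norm_sub_norm_le y x
theorem bump_cont : Continuous bump := by unfold bump; fun_prop
theorem bump_nonneg (x) : 0 ≤ bump x := le_max_left _ _
theorem bump_le (x) : bump x ≤ 1 := max_le zero_le_one (by linarith [norm_nonneg x])
theorem bump_zero {x : ℂ} (h : 1 ≤ ‖x‖) : bump x = 0 := max_eq_left (by linarith)

noncomputable def T (v x : ℂ) : ℂ := x + bump x • v

theorem T_lower (v x y : ℂ) (hv : ‖v‖ ≤ 1 / 2) : ‖x - y‖ ≤ 2 * ‖T v x - T v y‖ := by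
  have h : x - y = (T v x - T v y) - (bump x - bump y) • v := by
    unfold T; rw [sub_smul]; ring
  have h2 : ‖(bump x - bump y) • v‖ ≤ ‖x - y‖ * (1 / 2) := by
    rw [norm_smul, Real.norm_eq_abs]
    exact mul_le_mul (bump_lip x y) hv (norm_nonneg _) (norm_nonneg _)
  have h3 : ‖x - y‖ ≤ ‖T v x - T v y‖ + ‖(bump x - bump y) • v‖ := by
    conv_lhs => rw [h]
    exact norm_sub_le _ _
  linarith

theorem T_surj (v y : ℂ) (hv : ‖v‖ ≤ 1 / 2) : ∃ x, T v x = y := by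
  have hc : ContractingWith (1 / 2 : NNReal) (fun x : ℂ => y - bump x • v) := by
    refine ⟨by rw [← NNReal.coe_lt_coe]; norm_num, LipschitzWith.of_dist_le_mul fun a b => ?_⟩
    rw [dist_eq_norm, dist_eq_norm]
    have : (y - bump a • v) - (y - bump b • v) = -((bump a - bump b) • v) := by rw [sub_smul]; ring
    rw [this, norm_neg, norm_smul, Real.norm_eq_abs]
    have := mul_le_mul (bump_lip a b) hv (norm_nonneg _) (norm_nonneg _)
    push_cast
    linarith
  refine ⟨hc.fixedPoint, ?_⟩
  have h := hc.fixedPoint_isFixedPt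
  have h' : y - bump (hc.fixedPoint) • v = hc.fixedPoint := h
  unfold T
  rw [← sub_eq_iff_eq_add.1 h']

open Classical in
noncomputable def Ti (v y : ℂ) : ℂ := if hv : ‖v‖ ≤ 1 / 2 then (T_surj v y hv).choose else y

theorem T_Ti (v y : ℂ) (hv : ‖v‖ ≤ 1 / 2) : T v (Ti v y) = y := by
  unfold Ti; rw [dif_pos hv]; exact (T_surj v y hv).choose_spec

theorem T_inj (v x y : ℂ) (hv : ‖v‖ ≤ 1 / 2) (h : T v x = T v y) : x = y := by
  have := T_lower v x y hv
  rw [h, sub_self, norm_zero, mul_zero] at this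
  exact sub_eq_zero.1 (norm_le_zero_iff.1 this)

theorem Ti_T (v y : ℂ) (hv : ‖v‖ ≤ 1 / 2) : Ti v (T v y) = y :=
  T_inj v _ _ hv (T_Ti v _ hv)

theorem T_id (v x : ℂ) (h : 1 ≤ ‖x‖) : T v x = x := by
  unfold T; rw [bump_zero h]; simp
theorem Ti_id (v x : ℂ) (hv : ‖v‖ ≤ 1 / 2) (h : 1 ≤ ‖x‖) : Ti v x = x := by
  conv_lhs => rw [← T_id v x h]
  exact Ti_T v x hv
theorem T_zero (v : ℂ) : T v 0 = v := by simp [T, bump]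

theorem Ti_est (v w y z : ℂ) (hv : ‖v‖ ≤ 1 / 2) (hw : ‖w‖ ≤ 1 / 2) :
    ‖Ti v y - Ti w z‖ ≤ 2 * (‖y - z‖ + ‖v - w‖) := by
  have h := T_lower v (Ti v y) (Ti w z) hv
  rw [T_Ti v y hv] at h
  have h2 : T v (Ti w z) = z + bump (Ti w z) • (v - w) := by
    conv_rhs => rw [← T_Ti w z hw]
    rw [T_Ti w z hw]
    have := T_Ti w z hw
    unfold T at this ⊢
    rw [smul_sub]; linear_combination this
  have h3 : ‖y - T v (Ti w z)‖ ≤ ‖y - z‖ + ‖v - w‖ := by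
    rw [h2]
    have : y - (z + bump (Ti w z) • (v - w)) = (y - z) - bump (Ti w z) • (v - w) := by ring
    rw [this]
    refine (norm_sub_le _ _).trans ?_
    gcongr
    rw [norm_smul, Real.norm_eq_abs, abs_of_nonneg (bump_nonneg _)]
    exact mul_le_of_le_one_left (norm_nonneg _) (bump_le _)
  linarith

section
variable {P : Type*} [TopologicalSpace P]

theorem T_cont {v : P → ℂ} (hv : Continuous v) : Continuous (fun q : P × ℂ => T (v q.1) q.2) := by
  unfold T
  have := bump_cont
  fun_prop

theorem Ti_cont {v : P → ℂ} (hv : Continuous v) (hb : ∀ p, ‖v p‖ ≤ 1 / 2) :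
    Continuous (fun q : P × ℂ => Ti (v q.1) q.2) := by
  rw [continuous_iff_continuousAt]
  intro q
  rw [ContinuousAt, tendsto_iff_norm_sub_tendsto_zero]
  have hc : Continuous (fun r : P × ℂ => 2 * (‖r.2 - q.2‖ + ‖v r.1 - v q.1‖)) := by fun_prop
  have h0 := hc.tendsto q
  simp only [sub_self, norm_zero, add_zero, mul_zero] at h0
  exact squeeze_zero (fun _ => norm_nonneg _) (fun r => Ti_est _ _ _ _ (hb _) (hb _)) h0

variable {S : Type*} [TopologicalSpace S]

open Classical in
noncomputable def ext (j : ℂ → S) (f : ℂ → ℂ) (y : S) : S :=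
  if h : ∃ x, j x = y then j (f h.choose) else y

theorem ext_apply {j : ℂ → S} (hj : Function.Injective j) (f : ℂ → ℂ) (x : ℂ) : ext j f (j x) = j (f x) := by
  have h : ∃ x', j x' = j x := ⟨x, rfl⟩
  unfold ext
  rw [dif_pos h, hj h.choose_spec]

theorem ext_out {j : ℂ → S} (f : ℂ → ℂ) (y : S) (hy : y ∉ Set.range j) : ext j f y = y := by
  unfold ext; rw [dif_neg]; exact hy

theorem ext_id {j : ℂ → S} (hj : Function.Injective j) (f : ℂ → ℂ) (hf : ∀ x, 1 ≤ ‖x‖ → f x = x) (y : S)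
    (hy : y ∉ j '' Metric.ball 0 1) : ext j f y = y := by
  by_cases h : y ∈ Set.range j
  · obtain ⟨x, rfl⟩ := h
    rw [ext_apply hj, hf]
    by_contra hx
    exact hy ⟨x, by simpa using hx, rfl⟩
  · exact ext_out f y h

theorem ext_cont [T2Space S] {j : ℂ → S} (hj : IsOpenEmbedding j) (f : P → ℂ → ℂ)
    (hf : Continuous (fun q : P × ℂ => f q.1 q.2)) (hi : ∀ p x, 1 ≤ ‖x‖ → f p x = x) :
    Continuous (fun q : P × S => ext j (f q.1) q.2) := by
  rw [continuous_iff_continuousAt]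
  rintro ⟨p, y⟩
  by_cases h : y ∈ Set.range j
  · obtain ⟨x, rfl⟩ := h
    have ho : IsOpenEmbedding (Prod.map (id : P → P) j) := IsOpenEmbedding.id.prodMap hj
    have := ho.continuousAt_iff (g := (fun q : P × S => ext j (f q.1) q.2)) (x := (p, x))
    refine this.1 (Continuous.continuousAt ?_)
    have he : (fun q : P × S => ext j (f q.1) q.2) ∘ (Prod.map (id : P → P) j) = fun q => j (f q.1 q.2) := by
      funext q; exact ext_apply hj.injective _ _
    rw [he]
    exact hj.continuous.comp hf
  · have hc : IsClosed (j '' Metric.closedBall 0 1) := ((isCompact_closedBall _ _).image hj.continuous).isClosed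
    have hU : {q : P × S | q.2 ∉ j '' Metric.closedBall 0 1} ∈ 𝓝 (p, y) := by
      refine (hc.isOpen_compl.preimage continuous_snd).mem_nhds ?_
      rintro ⟨x, -, rfl⟩; exact h ⟨x, rfl⟩
    refine continuousAt_snd.congr ?_
    filter_upwards [hU] with q hq
    exact (ext_id hj.injective _ (hi _) _ (fun hh => hq (Set.image_mono Metric.ball_subset_closedBall hh))).symm

/-- jointly continuous family of homeomorphisms -/
structure Isot (φ ψ : P → S → S) : Prop where
  c1 : Continuous (fun q : P × S => φ q.1 q.2)
  c2 : Continuous (fun q : P × S => ψ q.1 q.2)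
  l : ∀ p x, ψ p (φ p x) = x
  r : ∀ p x, φ p (ψ p x) = x

theorem Isot.comp {φ ψ φ' ψ' : P → S → S} (h : Isot φ ψ) (h' : Isot φ' ψ') :
    Isot (fun p x => φ p (φ' p x)) (fun p x => ψ' p (ψ p x)) where
  c1 := h.c1.comp (continuous_fst.prodMk h'.c1)
  c2 := h'.c2.comp (continuous_fst.prodMk h.c2)
  l p x := by rw [h.l, h'.l]
  r p x := by rw [h'.r, h.r]

theorem Isot.symm {φ ψ : P → S → S} (h : Isot φ ψ) : Isot ψ φ := ⟨h.c2, h.c1, h.r, h.l⟩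

theorem Isot.param {Q : Type*} [TopologicalSpace Q] {φ ψ : P → S → S} (h : Isot φ ψ) {f : Q → P} (hf : Continuous f) :
    Isot (fun q => φ (f q)) (fun q => ψ (f q)) where
  c1 := h.c1.comp ((hf.comp continuous_fst).prodMk continuous_snd)
  c2 := h.c2.comp ((hf.comp continuous_fst).prodMk continuous_snd)
  l _ := h.l _
  r _ := h.r _

theorem single_push [T2Space S] {j : ℂ → S} (hj : IsOpenEmbedding j) {v : P → ℂ} (hv : Continuous v)
    (hb : ∀ p, ‖v p‖ ≤ 1 / 2) :
    ∃ φ ψ : P → S → S, Isot φ ψ ∧ (∀ p, φ p (j 0) = j (v p)) ∧ ∀ p, ∀ y ∉ j '' Metric.ball 0 1, φ p y = y := by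
  refine ⟨fun p => ext j (T (v p)), fun p => ext j (Ti (v p)), ⟨?_, ?_, ?_, ?_⟩, ?_, ?_⟩
  · exact ext_cont hj (fun p => T (v p)) (T_cont hv) (fun p x h => T_id _ _ h)
  · exact ext_cont hj (fun p => Ti (v p)) (Ti_cont hv hb) (fun p x h => Ti_id _ _ (hb p) h)
  · intro p y
    by_cases h : y ∈ Set.range j
    · obtain ⟨x, rfl⟩ := h
      rw [ext_apply hj.injective, ext_apply hj.injective, Ti_T _ _ (hb p)]
    · rw [ext_out _ y h, ext_out _ y h]
  · intro p y
    by_cases h : y ∈ Set.range j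
    · obtain ⟨x, rfl⟩ := h
      rw [ext_apply hj.injective, ext_apply hj.injective, T_Ti _ _ (hb p)]
    · rw [ext_out _ y h, ext_out _ y h]
  · intro p; show ext j (T (v p)) (j 0) = _; rw [ext_apply hj.injective, T_zero]
  · intro p y hy
    exact ext_id hj.injective _ (fun x h => T_id _ _ h) _ hy

theorem multi_push [T2Space S] {ι : Type*} (s : Finset ι) {j : ι → ℂ → S} (hj : ∀ i, IsOpenEmbedding (j i))
    (hd : ∀ i i', i ≠ i' → Disjoint (Set.range (j i)) (Set.range (j i'))) {v : ι → P → ℂ} (hv : ∀ i, Continuous (v i))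
    (hb : ∀ i p, ‖v i p‖ ≤ 1 / 2) :
    ∃ φ ψ : P → S → S, Isot φ ψ ∧ (∀ i ∈ s, ∀ p, φ p (j i 0) = j i (v i p)) ∧
      ∀ p y, (∀ i ∈ s, y ∉ Set.range (j i)) → φ p y = y := by
  classical
  induction s using Finset.induction_on with
  | empty => exact ⟨fun _ x => x, fun _ x => x, ⟨continuous_snd, continuous_snd, fun _ _ => rfl, fun _ _ => rfl⟩, by simp, by simp⟩
  | insert a s ha ih =>
    obtain ⟨φ, ψ, h1, h2, h3⟩ := ih
    obtain ⟨φ', ψ', h1', h2', h3'⟩ := single_push (hj a) (hv a) (hb a)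
    have hr : ∀ p, ∀ y ∉ Set.range (j a), φ' p y = y := fun p y hy => h3' p y fun hh => hy (Set.image_subset_range _ _ hh)
    refine ⟨_, _, h1'.comp h1, ?_, ?_⟩
    · intro i hi p
      rcases Finset.mem_insert.1 hi with rfl | hi2
      · change φ' p (φ p (j i 0)) = _
        rw [h3, h2']
        intro k hk hh
        have hne : i ≠ k := by rintro rfl; exact ha hk
        exact Set.disjoint_left.1 (hd _ _ hne) ⟨0, rfl⟩ hh
      · change φ' p (φ p (j i 0)) = _
        rw [h2 i hi2, hr]
        intro hh
        have hne : i ≠ a := by rintro rfl; exact ha hi2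
        exact Set.disjoint_left.1 (hd _ _ hne) ⟨_, rfl⟩ hh
    · intro p y hy
      change φ' p (φ p y) = _
      rw [h3 p y (fun i hi => hy i (Finset.mem_insert_of_mem hi)), hr p y (hy a (Finset.mem_insert_self _ _))]
end
end PB

namespace PB
open Topology Set

theorem interval_ind (Q : ℝ → ℝ → Prop) (mono : ∀ a b a' b', a ≤ a' → b' ≤ b → Q a b → Q a' b')
    (loc : ∀ x, ∃ ε > 0, Q (x - ε) (x + ε)) (cat : ∀ a b c, a ≤ b → b ≤ c → Q a b → Q b c → Q a c) : Q 0 1 := by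
  choose e he hq using loc
  obtain ⟨t, h0, hm, ⟨N, hN⟩, hc⟩ := exists_monotone_Icc_subset_open_cover_unitInterval
    (c := fun x : ℝ => {s : unitInterval | x - e x < s ∧ (s : ℝ) < x + e x})
    (fun x => isOpen_Ioo.preimage continuous_subtype_val)
    (fun s _ => mem_iUnion.2 ⟨s, by constructor <;> linarith [he s]⟩)
  have key : ∀ n, Q 0 (t n) := by
    intro n
    induction n with
    | zero =>
      rw [h0]
      exact mono _ _ _ _ (by simpa using (he 0).le) (by simpa using (he 0).le) (hq 0)
    | succ n ih =>
      refine cat _ _ _ (t n).2.1 (hm (Nat.le_succ n)) ih ?_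
      obtain ⟨x, hx⟩ := hc n
      have h1 := hx (left_mem_Icc.2 (hm (Nat.le_succ n)))
      have h2 := hx (right_mem_Icc.2 (hm (Nat.le_succ n)))
      exact mono _ _ _ _ h1.1.le h2.2.le (hq x)
  have := key N
  rwa [hN N le_rfl] at this

section
variable {S : Type*} [TopologicalSpace S]

def Vs (S : Type*) [TopologicalSpace S] : Set S := {x | ∃ j : ℂ → S, IsOpenEmbedding j ∧ x ∈ range j}

theorem Vs_open : IsOpen (Vs S) := by
  rw [isOpen_iff_mem_nhds]
  rintro x ⟨j, hj, hx⟩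
  filter_upwards [hj.isOpen_range.mem_nhds hx] with y hy
  exact ⟨j, hj, hy⟩

theorem Vs_local {x : S} (hx : x ∈ Vs S) {U : Set S} (hU : IsOpen U) (hxU : x ∈ U) :
    ∃ j : ℂ → S, IsOpenEmbedding j ∧ j 0 = x ∧ range j ⊆ U := by
  obtain ⟨j, hj, w, rfl⟩ := hx
  obtain ⟨r, hr, hb⟩ := Metric.isOpen_iff.1 (hU.preimage hj.continuous) w hxU
  have hs : (OpenPartialHomeomorph.univBall w r).source = univ := OpenPartialHomeomorph.univBall_source w r
  have he := (OpenPartialHomeomorph.univBall w r).isOpenEmbedding hs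
  refine ⟨j ∘ (OpenPartialHomeomorph.univBall w r), hj.comp he, by simp, ?_⟩
  rintro _ ⟨y, rfl⟩
  apply hb
  rw [← OpenPartialHomeomorph.univBall_target w hr]
  exact (OpenPartialHomeomorph.univBall w r).map_source (by rw [hs]; trivial)

variable {ι : Type*}

def Good (h : ℝ × ℝ → ι → S) (R : Set (ℝ × ℝ)) : Prop :=
  ∃ φ ψ : ℝ × ℝ → S → S, Isot φ ψ ∧ ∃ c : ι → S, ∀ p ∈ R, ∀ i, φ p (c i) = h p i

theorem Good.mono {h : ℝ × ℝ → ι → S} {R R' : Set (ℝ × ℝ)} (hh : R' ⊆ R) : Good h R → Good h R' := by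
  rintro ⟨φ, ψ, h1, c, h2⟩
  exact ⟨φ, ψ, h1, c, fun p hp => h2 p (hh hp)⟩

theorem Good.glue {h : ℝ × ℝ → ι → S} {A B W : Set (ℝ × ℝ)} (hA : Good h A) (hB : Good h B)
    {f : ℝ × ℝ → ℝ} (hf : Continuous f) {ρ : ℝ × ℝ → ℝ × ℝ} (hρ : Continuous ρ) (b : ℝ)
    (hρb : ∀ p, f p = b → ρ p = p) (h1 : ∀ p ∈ W, f p ≤ b → p ∈ A) (h2 : ∀ p ∈ W, b < f p → p ∈ B ∧ ρ p ∈ A ∧ ρ p ∈ B) :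
    Good h W := by
  obtain ⟨φA, ψA, iA, cA, eA⟩ := hA
  obtain ⟨φB, ψB, iB, cB, eB⟩ := hB
  have iAr := iA.param hρ
  have iBr := iB.param hρ
  have iC := iB.comp (iBr.symm.comp iAr)
  have hfc : Continuous (fun q : (ℝ × ℝ) × S => f q.1) := hf.comp continuous_fst
  refine ⟨fun p x => if f p ≤ b then φA p x else φB p (ψB (ρ p) (φA (ρ p) x)),
    fun p x => if f p ≤ b then ψA p x else ψA (ρ p) (φB (ρ p) (ψB p x)), ⟨?_, ?_, ?_, ?_⟩, cA, ?_⟩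
  · refine Continuous.if_le iA.c1 iC.c1 hfc continuous_const ?_
    intro q hq
    simp only [hρb _ hq, iB.r]
  · refine Continuous.if_le iA.c2 iC.c2 hfc continuous_const ?_
    intro q hq
    simp only [hρb _ hq, iB.r]
  · intro p x
    by_cases hp : f p ≤ b
    · simp only [hp, if_true, iA.l]
    · simp only [hp, if_false]; exact iC.l p x
  · intro p x
    by_cases hp : f p ≤ b
    · simp only [hp, if_true, iA.r]
    · simp only [hp, if_false]; exact iC.r p x
  · intro p hp i
    by_cases hfp : f p ≤ b
    · simp only [hfp, if_true]; exact eA p (h1 p hp hfp) i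
    · simp only [hfp, if_false]
      obtain ⟨g1, g2, g3⟩ := h2 p hp (not_le.1 hfp)
      rw [eA _ g2, ← eB _ g3, iB.l, eB _ g1]

theorem Good.local [T2Space S] [Finite ι] {h : ℝ × ℝ → ι → S} (hc : Continuous h) (p0 : ℝ × ℝ)
    (hi : Function.Injective (h p0)) (hV : ∀ i, h p0 i ∈ Vs S) :
    ∃ ε > 0, Good h (Icc (p0.1 - ε) (p0.1 + ε) ×ˢ Icc (p0.2 - ε) (p0.2 + ε)) := by
  classical
  obtain ⟨U, hU, hUd⟩ := (Set.toFinite (range (h p0))).t2_separation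
  have hJ : ∀ i, ∃ j : ℂ → S, IsOpenEmbedding j ∧ j 0 = h p0 i ∧ range j ⊆ U (h p0 i) :=
    fun i => Vs_local (hV i) (hU _).2 (hU _).1
  choose j hj hj0 hjU using hJ
  have hN : ∀ᶠ p in 𝓝 p0, ∀ i, h p i ∈ j i '' Metric.ball 0 (1 / 2) := by
    rw [Filter.eventually_all]
    intro i
    refine ((continuous_apply i).comp hc).continuousAt.eventually_mem ?_
    refine ((hj i).isOpenMap _ Metric.isOpen_ball).mem_nhds ⟨0, by simp, hj0 i⟩
  obtain ⟨ε, hε, hb⟩ := Metric.nhds_basis_closedBall.eventually_iff.1 hN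
  refine ⟨ε, hε, ?_⟩
  let ρ : ℝ × ℝ → ℝ × ℝ := fun p => (max (p0.1 - ε) (min (p0.1 + ε) p.1), max (p0.2 - ε) (min (p0.2 + ε) p.2))
  have hρ : Continuous ρ := by fun_prop
  have hρm : ∀ p, ρ p ∈ Metric.closedBall p0 ε := by
    intro p
    rw [← closedBall_prod_same, mem_prod, Real.closedBall_eq_Icc, Real.closedBall_eq_Icc]
    refine ⟨⟨le_max_left _ _, max_le (by linarith) (min_le_left _ _)⟩, ⟨le_max_left _ _, max_le (by linarith) (min_le_left _ _)⟩⟩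
  have hv : ∀ i p, ∃ v : ℂ, v ∈ Metric.ball 0 (1 / 2) ∧ j i v = h (ρ p) i := fun i p => hb (hρm p) i
  choose v hv1 hv2 using hv
  have := Fintype.ofFinite ι
  have q1 : ∀ i i', i ≠ i' → Disjoint (range (j i)) (range (j i')) := fun i i' hne =>
    (hUd ⟨i, rfl⟩ ⟨i', rfl⟩ (hi.ne hne)).mono (hjU i) (hjU i')
  have q2 : ∀ i, Continuous (v i) := by
    intro i
    rw [(hj i).isInducing.continuous_iff]
    have : j i ∘ v i = fun p => h (ρ p) i := by funext p; exact hv2 i p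
    rw [this]
    exact (continuous_apply i).comp (hc.comp hρ)
  have q3 : ∀ i p, ‖v i p‖ ≤ 1 / 2 := by
    intro i p
    have := hv1 i p
    rw [mem_ball_zero_iff] at this
    exact this.le
  obtain ⟨φ, ψ, g1, g2, -⟩ := multi_push (P := ℝ × ℝ) (Finset.univ : Finset ι) hj q1 q2 q3
  refine ⟨φ, ψ, g1, fun i => j i 0, ?_⟩
  rintro p ⟨hp1, hp2⟩ i
  rw [g2 i (Finset.mem_univ _), hv2]
  congr 1
  ext
  · show max _ (min _ _) = _
    rw [min_eq_right hp1.2, max_eq_right hp1.1]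
  · show max _ (min _ _) = _
    rw [min_eq_right hp2.2, max_eq_right hp2.1]

theorem Good.all [T2Space S] [Finite ι] {h : ℝ × ℝ → ι → S} (hc : Continuous h)
    (hi : ∀ p, Function.Injective (h p)) (hV : ∀ p i, h p i ∈ Vs S) :
    Good h (Icc 0 1 ×ˢ Icc 0 1) := by
  have step : ∀ x : ℝ, ∃ ε > 0, Good h (Icc (x - ε) (x + ε) ×ˢ Icc 0 1) := by
    intro x
    refine interval_ind (fun a b => ∃ ε > 0, Good h (Icc (x - ε) (x + ε) ×ˢ Icc a b)) ?_ ?_ ?_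
    · rintro a b a' b' h1 h2 ⟨ε, he, hg⟩
      exact ⟨ε, he, hg.mono (prod_mono le_rfl (Icc_subset_Icc h1 h2))⟩
    · intro y
      obtain ⟨ε, he, hg⟩ := Good.local hc (x, y) (hi _) (hV _)
      exact ⟨ε, he, ε, he, hg⟩
    · rintro a b c hab hbc ⟨ε, he, hg⟩ ⟨ε', he', hg'⟩
      have m1 := min_le_left ε ε'
      have m2 := min_le_right ε ε'
      refine ⟨min ε ε', lt_min he he', Good.glue hg hg' (f := Prod.snd) continuous_snd (ρ := fun p => (p.1, b)) (by fun_prop) b ?_ ?_ ?_⟩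
      · rintro ⟨p, q⟩ rfl; rfl
      · rintro ⟨p, q⟩ ⟨⟨hp1, hp2⟩, hq1, hq2⟩ hb
        exact ⟨⟨by simp only at *; linarith, by simp only at *; linarith⟩, hq1, hb⟩
      · rintro ⟨p, q⟩ ⟨⟨hp1, hp2⟩, hq1, hq2⟩ hb
        simp only [mem_prod, mem_Icc] at *
        refine ⟨⟨⟨?_, ?_⟩, ?_, ?_⟩, ⟨⟨?_, ?_⟩, ?_, ?_⟩, ⟨?_, ?_⟩, ?_, ?_⟩ <;> linarith
  refine interval_ind (fun a b => Good h (Icc a b ×ˢ Icc 0 1)) ?_ step ?_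
  · intro a b a' b' h1 h2 hg
    exact hg.mono (prod_mono (Icc_subset_Icc h1 h2) le_rfl)
  · intro a b c hab hbc hg hg'
    refine Good.glue hg hg' (f := Prod.fst) continuous_fst (ρ := fun p => (b, p.2)) (by fun_prop) b ?_ ?_ ?_
    · rintro ⟨p, q⟩ rfl; rfl
    · rintro ⟨p, q⟩ ⟨⟨hp1, hp2⟩, hq⟩ hb
      exact ⟨⟨hp1, hb⟩, hq⟩
    · rintro ⟨p, q⟩ ⟨⟨hp1, hp2⟩, hq1, hq2⟩ hb
      simp only [mem_prod, mem_Icc] at *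
      refine ⟨⟨⟨?_, ?_⟩, ?_, ?_⟩, ⟨⟨?_, ?_⟩, ?_, ?_⟩, ⟨?_, ?_⟩, ?_, ?_⟩ <;> linarith
end
end PB

namespace PB
open Topology Set unitInterval

theorem torus {X : Type*} [TopologicalSpace X] {x : X} (G : C(I × I, X)) (e d : Path x x)
    (h1 : ∀ t, G (t, 0) = e t) (h2 : ∀ t, G (t, 1) = e t) (h3 : ∀ t, G (0, t) = d t) (h4 : ∀ t, G (1, t) = d t) :
    Path.Homotopic (e.trans d) (d.trans e) := by
  have : ContractibleSpace I := (convex_Icc (0 : ℝ) 1).contractibleSpace ⟨0, by simp⟩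
  let a : Path ((0, 0) : I × I) (1, 0) := ⟨⟨fun t => (t, 0), by fun_prop⟩, rfl, rfl⟩
  let a' : Path ((0, 1) : I × I) (1, 1) := ⟨⟨fun t => (t, 1), by fun_prop⟩, rfl, rfl⟩
  let b : Path ((1, 0) : I × I) (1, 1) := ⟨⟨fun t => (1, t), by fun_prop⟩, rfl, rfl⟩
  let b' : Path ((0, 0) : I × I) (0, 1) := ⟨⟨fun t => (0, t), by fun_prop⟩, rfl, rfl⟩
  have hh := (SimplyConnectedSpace.paths_homotopic (a.trans b) (b'.trans a')).map G
  have e0 : x = G (0, 0) := by rw [h1]; simp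
  have e1 : x = G (1, 1) := by rw [h2]; simp
  obtain ⟨K⟩ := hh
  have q1 : ((a.trans b).map G.continuous).cast e0 e1 = e.trans d := by
    ext t
    simp only [Path.cast_coe, Path.map_coe, Function.comp, Path.trans_apply]
    split_ifs
    · exact h1 _
    · exact h4 _
  have q2 : ((b'.trans a').map G.continuous).cast e0 e1 = d.trans e := by
    ext t
    simp only [Path.cast_coe, Path.map_coe, Function.comp, Path.trans_apply]
    split_ifs
    · exact h3 _
    · exact h2 _
  rw [← q1, ← q2]
  exact ⟨⟨⟨K.toContinuousMap, K.map_zero_left, K.map_one_left⟩, K.prop'⟩⟩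

variable {S : Type*} [TopologicalSpace S] {ι : Type*}

abbrev Fib (z : ι → S) (i0 : ι) := {x : S // ∀ i, i ≠ i0 → x ≠ z i}

theorem key [T2Space S] [Finite ι] (z : ι → S) (i0 : ι) (f0 : Fib z i0) (hf0 : f0.1 = z i0) (γ δ : Path f0 f0)
    (H : I × I → ι → S) (hH : Continuous H) (hinj : ∀ p, Function.Injective (H p)) (hV : ∀ p i, H p i ∈ Vs S)
    (b1 : ∀ t, H (t, 0) i0 = γ t) (b2 : ∀ t, ∀ i ≠ i0, H (t, 0) i = z i) (b3 : ∀ t, H (t, 1) = z)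
    (b4 : ∀ t, H (0, t) = z) (b5 : ∀ t, H (1, t) = z) : Path.Homotopic (γ.trans δ) (δ.trans γ) := by
  let cl : ℝ × ℝ → I × I := fun p => (projIcc 0 1 zero_le_one p.1, projIcc 0 1 zero_le_one p.2)
  have hcl : Continuous cl := by fun_prop
  obtain ⟨φ, ψ, hi, c, hc⟩ := Good.all (h := fun p => H (cl p)) (hH.comp hcl) (fun p => hinj _) (fun p => hV _)
  have hcl1 : ∀ p : I × I, cl ((p.1 : ℝ), (p.2 : ℝ)) = p := by
    rintro ⟨p, q⟩; simp [cl]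
  have hc' : ∀ p : I × I, ∀ i, φ ((p.1 : ℝ), (p.2 : ℝ)) (c i) = H p i := by
    intro p i
    rw [hc _ ⟨p.1.2, p.2.2⟩]
    show H (cl _) i = _
    rw [hcl1]
  let Φ : I × I → S → S := fun p x => φ ((p.1 : ℝ), (p.2 : ℝ)) (ψ (0, 0) x)
  have hΦc : Continuous (fun q : (I × I) × S => Φ q.1 q.2) := by
    refine hi.c1.comp (Continuous.prodMk (by fun_prop) (hi.c2.comp (continuous_const.prodMk continuous_snd)))
  have hΦz : ∀ p i, Φ p (z i) = H p i := by
    intro p i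
    have : z i = φ (0, 0) (c i) := by
      have := hc' (0, 0) i
      rw [b4] at this
      simpa using this.symm
    simp only [Φ]
    rw [this, hi.l, hc']
  have hΦ0 : ∀ x, Φ (0, 0) x = x := by
    intro x; simp only [Φ]
    exact hi.r _ _
  have hΦi : ∀ p, Function.Injective (Φ p) := by
    intro p x y h
    have h1 := congrArg (ψ ((p.1 : ℝ), (p.2 : ℝ))) h
    simp only [Φ, hi.l] at h1
    have h2 := congrArg (φ (0, 0)) h1
    simpa only [hi.r] using h2
  let bot : Path ((0, 0) : I × I) (1, 0) := ⟨⟨fun t => (t, 0), by fun_prop⟩, rfl, rfl⟩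
  let rest : Path ((1, 0) : I × I) (0, 0) := ⟨⟨fun t => cl (2 - 3 * (t : ℝ), min (3 * (t : ℝ)) (3 - 3 * (t : ℝ))),
    hcl.comp (by fun_prop)⟩, by
      simp only [cl]
      ext <;> simp [projIcc], by
      simp only [cl]
      ext <;> simp [projIcc]; norm_num⟩
  have hrest : ∀ t, H (rest t) = z := by
    intro t
    have : rest t = cl (2 - 3 * (t : ℝ), min (3 * (t : ℝ)) (3 - 3 * (t : ℝ))) := rfl
    rw [this]
    simp only [cl]
    rcases le_or_gt (t : ℝ) (1 / 3) with h | h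
    · rw [projIcc_of_right_le (x := 2 - 3 * (t : ℝ)) _ (by linarith)]
      exact b5 _
    · rcases le_or_gt (2 / 3) (t : ℝ) with h' | h'
      · rw [projIcc_of_le_left (x := 2 - 3 * (t : ℝ)) _ (by linarith)]
        exact b4 _
      · rw [projIcc_of_right_le (x := min _ _) _ (le_min (by linarith) (by linarith))]
        exact b3 _
  have hq : ∀ t, ∀ i ≠ i0, H ((bot.trans rest) t) i = z i := by
    intro t i hne
    rw [Path.trans_apply]
    split_ifs
    · exact b2 _ _ hne
    · rw [hrest]
  let G : C(I × I, Fib z i0) := ⟨fun p => ⟨Φ ((bot.trans rest) p.1) (δ p.2).1, by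
      intro i hne h
      rw [← hq p.1 i hne, ← hΦz] at h
      exact (δ p.2).2 i hne (hΦi _ h)⟩, by
      refine Continuous.subtype_mk (hΦc.comp (Continuous.prodMk ?_ ?_)) _
      · exact (bot.trans rest).continuous.comp continuous_fst
      · exact continuous_subtype_val.comp (δ.continuous.comp continuous_snd)⟩
  have hG : ∀ t, G (t, 0) = (γ.trans (Path.refl f0)) t := by
    intro t
    apply Subtype.ext
    show Φ ((bot.trans rest) t) (δ 0).1 = _
    rw [δ.source, hf0, hΦz, Path.trans_apply, Path.trans_apply]
    split_ifs
    · exact b1 _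
    · rw [hrest, ← hf0]; rfl
  have T := torus G (γ.trans (Path.refl f0)) δ hG (fun t => by
      rw [← hG]
      apply Subtype.ext
      show Φ _ (δ 1).1 = Φ _ (δ 0).1
      rw [δ.source, δ.target])
    (fun t => by
      apply Subtype.ext
      show Φ ((bot.trans rest) 0) _ = _
      rw [Path.source, hΦ0]) (fun t => by
      apply Subtype.ext
      show Φ ((bot.trans rest) 1) _ = _
      rw [Path.target, hΦ0])
  have r := Path.Homotopic.trans_refl γ
  exact ((r.symm.hcomp (Path.Homotopic.refl δ)).trans T).trans ((Path.Homotopic.refl δ).hcomp r)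
end PB

namespace PB
open Topology Set

abbrev E2 := EuclideanSpace ℝ (Fin 2)
abbrev HH := EuclideanHalfSpace 2

theorem half_emb (w : HH) (hw : 0 < w.1 0) (U : Set HH) (hU : IsOpen U) (hwU : w ∈ U) :
    ∃ k : ℂ → HH, IsOpenEmbedding k ∧ k 0 = w ∧ range k ⊆ U := by
  obtain ⟨U', hU', rfl⟩ := isOpen_induced_iff.1 hU
  have hO : IsOpen (U' ∩ {y : E2 | 0 < y 0}) := hU'.inter (isOpen_lt continuous_const (by fun_prop))
  obtain ⟨r, hr, hb⟩ := Metric.isOpen_iff.1 hO w.1 ⟨hwU, hw⟩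
  have hs : (OpenPartialHomeomorph.univBall w.1 r).source = univ := OpenPartialHomeomorph.univBall_source _ r
  have he := (OpenPartialHomeomorph.univBall w.1 r).isOpenEmbedding hs
  let L := Complex.orthonormalBasisOneI.repr.toHomeomorph
  let g : ℂ → E2 := (OpenPartialHomeomorph.univBall w.1 r) ∘ L
  have hg : IsOpenEmbedding g := he.comp L.isOpenEmbedding
  have hgr : ∀ x, g x ∈ U' ∩ {y : E2 | 0 < y 0} := by
    intro x
    apply hb
    rw [← OpenPartialHomeomorph.univBall_target w.1 hr]
    exact (OpenPartialHomeomorph.univBall w.1 r).map_source (by rw [hs]; trivial)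
  let k : ℂ → HH := fun x => ⟨g x, (hgr x).2.le⟩
  have hk : Continuous k := hg.continuous.subtype_mk _
  refine ⟨k, ⟨?_, ?_⟩, ?_, ?_⟩
  · exact IsEmbedding.of_comp hk continuous_subtype_val hg.isEmbedding
  · have : range k = Subtype.val ⁻¹' (range g) := by
      ext y; constructor
      · rintro ⟨x, rfl⟩; exact ⟨x, rfl⟩
      · rintro ⟨x, hx⟩; exact ⟨x, Subtype.ext hx⟩
    rw [this]
    exact hg.isOpen_range.preimage continuous_subtype_val
  · apply Subtype.ext
    show (OpenPartialHomeomorph.univBall w.1 r) (L 0) = w.1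
    have : L 0 = 0 := Complex.orthonormalBasisOneI.repr.map_zero
    rw [this]; simp
  · rintro _ ⟨x, rfl⟩; exact (hgr x).1

variable {S : Type*} [TopologicalSpace S]

theorem interior_Vs (e : OpenPartialHomeomorph S HH) (x : S) (hx : x ∈ e.source) (h0 : 0 < (e x).1 0) : x ∈ Vs S := by
  obtain ⟨k, hk, hk0, hkr⟩ := half_emb (e x) h0 e.target e.open_target (e.map_source hx)
  let Kh := (hk.toOpenPartialHomeomorph k).trans e.symm
  have hs : Kh.source = univ := by
    ext y
    simp only [Kh, OpenPartialHomeomorph.trans_source, mem_inter_iff, mem_preimage]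
    simpa using hkr ⟨y, rfl⟩
  refine ⟨Kh, Kh.isOpenEmbedding hs, 0, ?_⟩
  show e.symm (k 0) = x
  rw [hk0, e.left_inv hx]

noncomputable def tau (c : HH) (r : ℝ) (y : HH) : HH :=
  ⟨y.1 + ((1 / 2) * max 0 (r - ‖y.1 - c.1‖)) • EuclideanSpace.single 0 1, by
    have h := y.2
    have : 0 ≤ max 0 (r - ‖y.1 - c.1‖) := le_max_left _ _
    simp; positivity⟩

theorem tau_cont (c r) : Continuous (tau c r) := by
  unfold tau; fun_prop

theorem tau_inj (c r) : Function.Injective (tau c r) := by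
  intro x y h
  have h1 : x.1 + ((1 / 2) * max 0 (r - ‖x.1 - c.1‖)) • EuclideanSpace.single 0 (1 : ℝ) =
    y.1 + ((1 / 2) * max 0 (r - ‖y.1 - c.1‖)) • EuclideanSpace.single 0 (1 : ℝ) := congrArg Subtype.val h
  have h2 : x.1 - y.1 = ((1 / 2) * (max 0 (r - ‖y.1 - c.1‖) - max 0 (r - ‖x.1 - c.1‖))) • EuclideanSpace.single 0 (1 : ℝ) := by
    have := sub_eq_zero.2 h1
    rw [← sub_eq_zero, ← this]; module
  have h3 : ‖x.1 - y.1‖ = (1 / 2) * |max 0 (r - ‖y.1 - c.1‖) - max 0 (r - ‖x.1 - c.1‖)| := by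
    conv_lhs => rw [h2]
    rw [norm_smul, EuclideanSpace.norm_single, Real.norm_eq_abs, abs_mul]; norm_num
  have h4 : |max 0 (r - ‖y.1 - c.1‖) - max 0 (r - ‖x.1 - c.1‖)| ≤ ‖x.1 - y.1‖ := by
    have := abs_max_sub_max_le_max 0 (r - ‖y.1 - c.1‖) 0 (r - ‖x.1 - c.1‖)
    have h5 : |(r - ‖y.1 - c.1‖) - (r - ‖x.1 - c.1‖)| ≤ ‖x.1 - y.1‖ := by
      have h6 := abs_norm_sub_norm_le (x.1 - c.1) (y.1 - c.1)
      rw [sub_sub_sub_cancel_right] at h6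
      rwa [sub_sub_sub_cancel_left]
    refine this.trans (max_le (by simp) h5)
  have h5 : ‖x.1 - y.1‖ ≤ 0 := by linarith
  exact Subtype.ext (sub_eq_zero.1 (norm_le_zero_iff.1 h5))

theorem tau_ball (c : HH) (r) (y : HH) (h : ‖y.1 - c.1‖ ≤ r) : ‖(tau c r y).1 - c.1‖ ≤ r := by
  have : (tau c r y).1 - c.1 = (y.1 - c.1) + ((1 / 2) * max 0 (r - ‖y.1 - c.1‖)) • EuclideanSpace.single 0 (1 : ℝ) := by
    simp only [tau]; abel
  rw [this]
  refine (norm_add_le _ _).trans ?_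
  rw [norm_smul, EuclideanSpace.norm_single, max_eq_right (by linarith), Real.norm_eq_abs, abs_of_nonneg (by linarith)]
  norm_num; linarith

theorem tau_out (c : HH) (r) (y : HH) (h : r ≤ ‖y.1 - c.1‖) : tau c r y = y := by
  apply Subtype.ext
  simp only [tau]
  rw [max_eq_left (by linarith)]; simp

theorem tau_pos (c : HH) (r) (y : HH) (h : ‖y.1 - c.1‖ < r) : 0 < (tau c r y).1 0 := by
  have h0 := y.2
  have : 0 < max 0 (r - ‖y.1 - c.1‖) := lt_max_of_lt_right (by linarith)
  simp [tau]
  first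
  | positivity
  | linarith

def CB (c : HH) (r : ℝ) : Set HH := {y | ‖y.1 - c.1‖ ≤ r}
def OB (c : HH) (r : ℝ) : Set HH := {y | ‖y.1 - c.1‖ < r}
theorem OB_open (c r) : IsOpen (OB c r) := isOpen_lt (by fun_prop) continuous_const
theorem CB_nhds (c : HH) (U : Set HH) (hU : IsOpen U) (hc : c ∈ U) : ∃ r > 0, CB c r ⊆ U := by
  obtain ⟨U', hU', rfl⟩ := isOpen_induced_iff.1 hU
  obtain ⟨r, hr, hb⟩ := (Metric.nhds_basis_closedBall.mem_iff).1 (hU'.mem_nhds (x := c.1) hc)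
  refine ⟨r, hr, fun y hy => hb ?_⟩
  rw [Metric.mem_closedBall, dist_eq_norm]; exact hy

def Shr (K : Set S) (Ψ : S → S) : Prop :=
  Continuous Ψ ∧ Function.Injective Ψ ∧ (∀ x ∈ K, Ψ x = x) ∧ ∀ x, Ψ x = x ∨ Ψ x ∈ Vs S

theorem shr_local [T2Space S] (e : OpenPartialHomeomorph S HH) (K : Set S) (hK : IsClosed K) (x : S) (hx : x ∈ e.source)
    (hxK : x ∉ K) : ∃ N ∈ 𝓝 x, ∃ Ψ, Shr K Ψ ∧ ∀ y ∈ N, Ψ y ∈ Vs S := by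
  classical
  have hO : IsOpen (e.target ∩ e.symm ⁻¹' Kᶜ) := e.isOpen_inter_preimage_symm hK.isOpen_compl
  obtain ⟨r, hr, hb⟩ := CB_nhds (e x) _ hO ⟨e.map_source hx, by simpa [e.left_inv hx] using hxK⟩
  set c := e x
  have hb' : ∀ y : HH, ‖y.1 - c.1‖ ≤ r → y ∈ e.target ∧ e.symm y ∉ K := by
    intro y hy
    exact hb hy
  have hBc : IsCompact (CB c r) := by
    have : IsClosedEmbedding (Subtype.val : HH → E2) := by
      refine IsClosed.isClosedEmbedding_subtypeVal ?_
      exact isClosed_le (f := fun _ : E2 => (0 : ℝ)) (g := fun y : E2 => y 0) continuous_const (by fun_prop)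
    have h := this.isCompact_preimage (isCompact_closedBall c.1 r)
    refine (congrArg IsCompact ?_).mp h
    ext y
    rw [mem_preimage, Metric.mem_closedBall, dist_eq_norm]; exact Iff.rfl
  set B := e.symm '' CB c r with hB
  have hBcl : IsClosed B := (hBc.image_of_continuousOn (e.continuousOn_symm.mono fun y hy => (hb hy).1)).isClosed
  have hBs : B ⊆ e.source := by
    rintro _ ⟨y, hy, rfl⟩; exact e.map_target (hb hy).1
  let Ψ : S → S := fun y => if y ∈ e.source then e.symm (tau c r (e y)) else y
  have hin : ∀ y ∈ e.source, Ψ y = e.symm (tau c r (e y)) := fun y hy => if_pos hy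
  have hout : ∀ y ∉ B, Ψ y = y := by
    intro y hy
    by_cases hs : y ∈ e.source
    · rw [hin y hs, tau_out, e.left_inv hs]
      by_contra hlt
      push Not at hlt
      exact hy ⟨e y, hlt.le, e.left_inv hs⟩
    · exact if_neg hs
  have hBe : ∀ y ∈ B, ‖(e y).1 - c.1‖ ≤ r := by
    rintro _ ⟨y, hy, rfl⟩
    rw [e.right_inv (hb hy).1]; exact hy
  have hBB : ∀ y ∈ B, Ψ y ∈ B := by
    intro y hy
    rw [hin y (hBs hy)]
    refine ⟨_, ?_, rfl⟩
    exact tau_ball _ _ _ (hBe y hy)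
  have hpos : ∀ y ∈ e.source, ‖(e y).1 - c.1‖ < r → Ψ y ∈ Vs S := by
    intro y hy h
    have ht := (hb' _ (tau_ball c r (e y) h.le)).1
    rw [hin y hy]
    refine interior_Vs e _ (e.map_target ht) ?_
    rw [e.right_inv ht]
    exact tau_pos _ _ _ h
  refine ⟨e.source ∩ e ⁻¹' OB c r, (e.isOpen_inter_preimage (OB_open c r)).mem_nhds ⟨hx, by simpa [OB, c] using hr⟩,
    Ψ, ⟨?_, ?_, ?_, ?_⟩, ?_⟩
  · rw [continuous_iff_continuousAt]
    intro y
    by_cases hy : y ∈ B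
    · have hs := hBs hy
      have ht := (hb' _ (tau_ball c r (e y) (hBe y hy))).1
      have h1 : ContinuousAt (fun y => e.symm (tau c r (e y))) y :=
        ContinuousAt.comp (g := e.symm) (f := fun y => tau c r (e y)) (e.continuousAt_symm ht)
          ((tau_cont c r).continuousAt.comp (e.continuousAt hs))
      refine h1.congr ?_
      filter_upwards [e.open_source.mem_nhds hs] with u hu
      exact (hin u hu).symm
    · refine continuousAt_id.congr ?_
      filter_upwards [hBcl.isOpen_compl.mem_nhds hy] with u hu
      exact (hout u hu).symm
  · intro y y' h
    by_cases hy : y ∈ B <;> by_cases hy' : y' ∈ B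
    · rw [hin y (hBs hy), hin y' (hBs hy')] at h
      have h1 := e.symm.injOn (hb' _ (tau_ball c r (e y) (hBe y hy))).1 (hb' _ (tau_ball c r (e y') (hBe y' hy'))).1 h
      exact e.injOn (hBs hy) (hBs hy') (tau_inj _ _ h1)
    · rw [hout y' hy'] at h
      exact absurd (h ▸ hBB y hy) hy'
    · rw [hout y hy] at h
      exact absurd (h ▸ hBB y' hy') hy
    · rwa [hout y hy, hout y' hy'] at h
  · intro y hy
    apply hout
    rintro ⟨u, hu, rfl⟩
    exact (hb hu).2 hy
  · intro y
    by_cases hs : y ∈ e.source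
    · by_cases h : ‖(e y).1 - c.1‖ < r
      · exact Or.inr (hpos y hs h)
      · left; rw [hin y hs, tau_out _ _ _ (not_lt.1 h), e.left_inv hs]
    · left; exact if_neg hs
  · rintro y ⟨hs, hy⟩
    refine hpos y hs ?_
    exact hy

theorem shrink [T2Space S] [CompactSpace S] [ChartedSpace HH S] (K : Set S) (hK : IsClosed K) (hKV : K ⊆ Vs S) :
    ∃ Ψ : S → S, Continuous Ψ ∧ Function.Injective Ψ ∧ (∀ x ∈ K, Ψ x = x) ∧ ∀ x, Ψ x ∈ Vs S := by
  have hid : Shr K (id : S → S) := ⟨continuous_id, Function.injective_id, fun _ _ => rfl, fun _ => Or.inl rfl⟩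
  have key : ∃ Ψ, Shr K Ψ ∧ ∀ y ∈ (univ : Set S), Ψ y ∈ Vs S := by
    refine isCompact_univ.induction_on (p := fun A => ∃ Ψ, Shr K Ψ ∧ ∀ y ∈ A, Ψ y ∈ Vs S) ⟨id, hid, by simp⟩ ?_ ?_ ?_
    · rintro s t hst ⟨Ψ, h1, h2⟩
      exact ⟨Ψ, h1, fun y hy => h2 y (hst hy)⟩
    · rintro s t ⟨Ψ, ⟨a1, a2, a3, a4⟩, a5⟩ ⟨Φ, ⟨b1, b2, b3, b4⟩, b5⟩
      have hV : ∀ y, y ∈ Vs S → Φ y ∈ Vs S := by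
        intro y hy
        rcases b4 y with h | h
        · rwa [h]
        · exact h
      refine ⟨Φ ∘ Ψ, ⟨b1.comp a1, b2.comp a2, fun x hx => by simp [a3 x hx, b3 x hx], ?_⟩, ?_⟩
      · intro x
        rcases a4 x with h | h
        · simp only [Function.comp, h]; exact b4 x
        · exact Or.inr (hV _ h)
      · rintro y (hy | hy)
        · exact hV _ (a5 y hy)
        · rcases a4 y with h | h
          · simp only [Function.comp, h]; exact b5 y hy
          · exact hV _ h
    · intro x _
      rw [nhdsWithin_univ]
      by_cases hx : x ∈ K
      · exact ⟨Vs S, Vs_open.mem_nhds (hKV hx), id, hid, fun y hy => hy⟩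
      · exact shr_local (chartAt HH x) K hK x (mem_chart_source HH x) hx
  obtain ⟨Ψ, ⟨h1, h2, h3, -⟩, h4⟩ := key
  exact ⟨Ψ, h1, h2, h3, fun x => h4 x trivial⟩
end PB

namespace PB
open Topology Set

theorem remove_point {X : Type*} [TopologicalSpace X] [T1Space X] {s U : Set X} {p : X} (hs : IsPreconnected s)
    (hp : p ∈ s) (hU : U ∈ 𝓝 p) (hUp : IsPreconnected (U \ {p})) (hUs : U ⊆ s) : IsPreconnected (s \ {p}) := by
  have aux : ∀ u v, IsOpen u → IsOpen v → s \ {p} ⊆ u ∪ v → (s \ {p}) ∩ (u ∩ v) = ∅ → U \ {p} ⊆ u → s \ {p} ⊆ u := by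
    intro u v hu hv hc hd hUu
    have key := isPreconnected_iff_subset_of_disjoint.1 hs (u ∪ interior U) (v \ {p}) (hu.union isOpen_interior)
      (hv.sdiff isClosed_singleton) ?_ ?_
    · rcases key with h | h
      · rintro x ⟨hx, hxp⟩
        rcases h hx with h' | h'
        · exact h'
        · exact hUu ⟨interior_subset h', hxp⟩
      · exact absurd rfl (h hp).2
    · intro x hx
      by_cases hxp : x = p
      · subst hxp; exact Or.inl (Or.inr (mem_interior_iff_mem_nhds.2 hU))
      · rcases hc ⟨hx, hxp⟩ with h | h
        · exact Or.inl (Or.inl h)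
        · exact Or.inr ⟨h, hxp⟩
    · rw [eq_empty_iff_forall_notMem] at hd ⊢
      rintro x ⟨hx, h1 | h1, h2, hxp⟩
      · exact hd x ⟨⟨hx, hxp⟩, h1, h2⟩
      · exact hd x ⟨⟨hx, hxp⟩, hUu ⟨interior_subset h1, hxp⟩, h2⟩
  rw [isPreconnected_iff_subset_of_disjoint]
  intro u v hu hv hc hd
  have hsub : U \ {p} ⊆ s \ {p} := diff_subset_diff_left hUs
  rcases isPreconnected_iff_subset_of_disjoint.1 hUp u v hu hv (hsub.trans hc)
    (subset_empty_iff.1 (hd ▸ inter_subset_inter_left _ hsub)) with h | h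
  · exact Or.inl (aux u v hu hv hc hd h)
  · exact Or.inr (aux v u hv hu (by rwa [union_comm]) (by rwa [inter_comm v u]) h)

theorem half_punct (c : HH) (r : ℝ) (hc : c.1 0 = 0) : IsPreconnected (OB c r \ {c}) := by
  rw [← (IsInducing.subtypeVal : IsInducing (Subtype.val : HH → E2)).isPreconnected_image]
  let O : Set E2 := Metric.ball c.1 r ∩ {y | 0 < y 0}
  have hO : IsPreconnected O := by
    refine ((convex_ball _ _).inter ?_).isPreconnected
    intro x hx y hy a b ha hb hab
    simp only [mem_setOf_eq] at *
    simp only [PiLp.add_apply, PiLp.smul_apply, smul_eq_mul]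
    rcases eq_or_lt_of_le ha with h | h
    · have : b = 1 := by linarith
      subst this; rw [← h]; linarith
    · have := mul_pos h hx
      have := mul_nonneg hb hy.le
      linarith
  refine hO.subset_closure ?_ ?_
  · rintro y ⟨hy1, hy2⟩
    have hy2' : 0 < y 0 := hy2
    refine ⟨⟨y, hy2'.le⟩, ⟨?_, ?_⟩, rfl⟩
    · rw [Metric.mem_ball, dist_eq_norm] at hy1; exact hy1
    · intro h
      have h' := congrArg (fun q : HH => q.1 0) h
      simp only [hc] at h'
      exact hy2'.ne' h'
  · rintro _ ⟨y, ⟨hy, -⟩, rfl⟩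
    have hcont : Continuous (fun t : ℝ => y.1 + t • (EuclideanSpace.single 0 (1 : ℝ) : E2)) := by fun_prop
    have ht : Filter.Tendsto (fun t : ℝ => y.1 + t • (EuclideanSpace.single 0 (1 : ℝ) : E2)) (𝓝[>] 0) (𝓝 y.1) := by
      have := hcont.tendsto 0
      rw [zero_smul, add_zero] at this
      exact this.mono_left nhdsWithin_le_nhds
    refine mem_closure_of_tendsto ht ?_
    have hb : Metric.ball c.1 r ∈ 𝓝 y.1 := Metric.isOpen_ball.mem_nhds (by rw [Metric.mem_ball, dist_eq_norm]; exact hy)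
    filter_upwards [ht hb, self_mem_nhdsWithin] with t h1 h2
    refine ⟨h1, ?_⟩
    have h3 : 0 ≤ y.1 0 := y.2
    have h4 : (0 : ℝ) < t := h2
    simp only [mem_setOf_eq, PiLp.add_apply, PiLp.smul_apply, EuclideanSpace.single_apply, smul_eq_mul]
    simp; linarith

variable {S : Type*} [TopologicalSpace S]

theorem local_punct [T2Space S] [ChartedSpace HH S] (X : Set S) (hX : IsOpen X) (p : S) (hp : p ∈ X) :
    ∃ U ∈ 𝓝 p, U ⊆ X ∧ IsPreconnected (U \ {p}) := by
  by_cases hV : p ∈ Vs S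
  · obtain ⟨j, hj, rfl, hr⟩ := Vs_local hV hX hp
    refine ⟨range j, hj.isOpen_range.mem_nhds ⟨0, rfl⟩, hr, ?_⟩
    have : range j \ {j 0} = j '' {0}ᶜ := by
      rw [image_compl_eq_range_sdiff_image hj.injective, image_singleton]
    rw [this]
    refine IsPreconnected.image (IsConnected.isPreconnected ?_) _ hj.continuous.continuousOn
    exact isConnected_compl_singleton_of_one_lt_rank (by rw [Complex.rank_real_complex]; norm_num) 0
  · let e := chartAt HH p
    have hs : p ∈ e.source := mem_chart_source HH p
    have h0 : (e p).1 0 = 0 := by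
      by_contra h
      exact hV (interior_Vs e p hs (lt_of_le_of_ne (e p).2 (Ne.symm h)))
    obtain ⟨r, hr, hb⟩ := CB_nhds (e p) _ (e.isOpen_inter_preimage_symm hX) ⟨e.map_source hs, by simpa [e.left_inv hs] using hp⟩
    have hb' : OB (e p) r ⊆ e.target ∩ e.symm ⁻¹' X := fun y hy => hb (show ‖y.1 - (e p).1‖ ≤ r from le_of_lt hy)
    have hpO : e p ∈ OB (e p) r := by simpa [OB] using hr
    refine ⟨e.symm '' OB (e p) r, ?_, ?_, ?_⟩
    · refine (e.symm.isOpen_image_of_subset_source (OB_open _ _) fun y hy => (hb' hy).1).mem_nhds ⟨e p, hpO, e.left_inv hs⟩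
    · rintro _ ⟨y, hy, rfl⟩; exact (hb' hy).2
    · have : e.symm '' OB (e p) r \ {p} = e.symm '' (OB (e p) r \ {e p}) := by
        ext x; constructor
        · rintro ⟨⟨y, hy, rfl⟩, hx⟩
          refine ⟨y, ⟨hy, ?_⟩, rfl⟩
          rintro rfl; exact hx (e.left_inv hs)
        · rintro ⟨y, ⟨hy, hne⟩, rfl⟩
          refine ⟨⟨y, hy, rfl⟩, ?_⟩
          intro h
          have h' : e.symm y = p := h
          apply hne
          show y = e p
          rw [← h', e.right_inv (hb' hy).1]
      rw [this]
      exact (half_punct _ _ h0).image _ (e.continuousOn_symm.mono fun y hy => (hb' hy.1).1)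

theorem compl_finite [T2Space S] [ConnectedSpace S] [ChartedSpace HH S] (A : Set S) (hA : A.Finite) : IsPreconnected Aᶜ := by
  induction A, hA using Set.Finite.induction_on with
  | empty => simpa using isPreconnected_univ
  | @insert a s ha hs ih =>
    obtain ⟨U, h1, h2, h3⟩ := local_punct sᶜ hs.isClosed.isOpen_compl a ha
    have := remove_point ih ha h1 h3 h2
    have he : (insert a s)ᶜ = sᶜ \ {a} := by ext x; simp [not_or, and_comm]
    rwa [he]

theorem Vs_nonempty [Nonempty S] [ChartedSpace HH S] : (Vs S).Nonempty := by
  obtain ⟨p⟩ := ‹Nonempty S›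
  let e := chartAt HH p
  have hs : p ∈ e.source := mem_chart_source HH p
  obtain ⟨r, hr, hb⟩ := CB_nhds (e p) _ e.open_target (e.map_source hs)
  have ht := hb (tau_ball (e p) r (e p) (by simpa using hr.le))
  refine ⟨e.symm (tau (e p) r (e p)), interior_Vs e _ (e.map_target ht) ?_⟩
  rw [e.right_inv ht]
  exact tau_pos _ _ _ (by simpa using hr)

theorem S_inf [Nonempty S] [ChartedSpace HH S] : Infinite S := by
  obtain ⟨x, j, hj, -⟩ := Vs_nonempty (S := S)
  exact Infinite.of_injective j hj.injective

theorem conf_pc [T2Space S] [ConnectedSpace S] [ChartedSpace HH S] (n : ℕ) :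
    PathConnectedSpace {x : Fin n → S // Function.Injective x} := by
  classical
  have : LocallyPathConnectedSpace S := ChartedSpace.locallyPathConnectedSpace HH S
  have hinf : Infinite S := S_inf
  have havoid : ∀ A : Set S, A.Finite → ∃ w : Fin n → S, Function.Injective w ∧ ∀ i, w i ∉ A := by
    intro A hA
    have hAi : Infinite (Aᶜ : Set S) := hA.infinite_compl.to_subtype
    let f := Infinite.natEmbedding (Aᶜ : Set S)
    exact ⟨fun i => (f i).1, fun i j h => Fin.ext (f.injective (Subtype.ext h)), fun i => (f i).2⟩
  have step : ∀ (x : {x : Fin n → S // Function.Injective x}) (i : Fin n) (y : S) (hy : Function.Injective (Function.update x.1 i y)),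
      Joined x ⟨Function.update x.1 i y, hy⟩ := by
    intro x i y hy
    let A : Set S := x.1 '' {i}ᶜ
    have hA : A.Finite := (Set.toFinite _).image _
    have hxA : x.1 i ∈ Aᶜ := by
      rintro ⟨k, hk, h⟩; exact hk (x.2 h)
    have hyA : y ∈ Aᶜ := by
      rintro ⟨k, hk, h⟩
      have hk' : k ≠ i := hk
      exact hk (hy (by rw [Function.update_of_ne hk', Function.update_self]; exact h))
    have hpc : IsPathConnected Aᶜ := (hA.isClosed.isOpen_compl.isConnected_iff_isPathConnected).1 ⟨⟨_, hxA⟩, compl_finite A hA⟩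
    obtain ⟨γ, hγ⟩ := hpc.joinedIn _ hxA _ hyA
    have hin : ∀ t, Function.Injective (Function.update x.1 i (γ t)) := by
      intro t a b hab
      have hk : ∀ k, k ≠ i → x.1 k ≠ γ t := fun k hk h => hγ t ⟨k, hk, h⟩
      by_cases ha : a = i <;> by_cases hb : b = i
      · rw [ha, hb]
      · subst ha; rw [Function.update_self, Function.update_of_ne hb] at hab
        exact absurd hab.symm (hk b hb)
      · subst hb; rw [Function.update_self, Function.update_of_ne ha] at hab
        exact absurd hab (hk a ha)
      · rw [Function.update_of_ne ha, Function.update_of_ne hb] at hab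
        exact x.2 hab
    refine ⟨⟨⟨fun t => ⟨Function.update x.1 i (γ t), hin t⟩, ?_⟩, ?_, ?_⟩⟩
    · exact Continuous.subtype_mk (continuous_const.update i γ.continuous) _
    · apply Subtype.ext; simp
    · apply Subtype.ext; simp
  have move : ∀ (x w : {x : Fin n → S // Function.Injective x}) (_ : ∀ i k, w.1 i ≠ x.1 k), Joined x w := by
    intro x w hd
    have hpi : ∀ s : Finset (Fin n), Function.Injective (s.piecewise w.1 x.1) := by
      intro s a b hab
      by_cases ha : a ∈ s <;> by_cases hb : b ∈ s <;> simp only [Finset.piecewise, ha, hb, if_true, if_false] at hab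
      · exact w.2 hab
      · exact absurd hab (hd _ _)
      · exact absurd hab.symm (hd _ _)
      · exact x.2 hab
    have hj : ∀ s : Finset (Fin n), Joined x ⟨s.piecewise w.1 x.1, hpi s⟩ := by
      intro s
      induction s using Finset.induction_on with
      | empty =>
        have : (⟨(∅ : Finset (Fin n)).piecewise w.1 x.1, hpi ∅⟩ : {x : Fin n → S // Function.Injective x}) = x :=
          Subtype.ext (by simp)
        rw [this]
      | insert a s ha ih =>
        refine ih.trans ?_
        have hi := hpi (insert a s)
        have := step ⟨s.piecewise w.1 x.1, hpi s⟩ a (w.1 a) (by rw [Finset.piecewise_insert] at hi; exact hi)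
        convert this using 2
        rw [Finset.piecewise_insert]
    have := hj Finset.univ
    convert this
    simp
  refine ⟨?_, ?_⟩
  · obtain ⟨w, hw, -⟩ := havoid ∅ finite_empty
    exact ⟨⟨w, hw⟩⟩
  · intro x y
    obtain ⟨w, hw, hwA⟩ := havoid (range x.1 ∪ range y.1) ((finite_range _).union (finite_range _))
    have h1 := move x ⟨w, hw⟩ (fun i k h => hwA i (Or.inl ⟨k, h.symm⟩))
    have h2 := move y ⟨w, hw⟩ (fun i k h => hwA i (Or.inr ⟨k, h.symm⟩))
    exact h1.trans h2.symm
end PB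

namespace PB
open Topology Set unitInterval

theorem cos_bd (z : ℂ) (h : |z.im| ≤ 1) : ‖Complex.cos z‖ < 4 := by
  have h1 : ‖Complex.exp (z * Complex.I)‖ ≤ Real.exp 1 := by
    rw [Complex.norm_exp]; apply Real.exp_le_exp.2; simp; linarith [(abs_le.1 h).1]
  have h2 : ‖Complex.exp (-z * Complex.I)‖ ≤ Real.exp 1 := by
    rw [Complex.norm_exp]; apply Real.exp_le_exp.2; simp; linarith [(abs_le.1 h).2]
  have h3 := Real.exp_one_lt_d9
  rw [Complex.cos, norm_div]
  have := norm_add_le (Complex.exp (z * Complex.I)) (Complex.exp (-z * Complex.I))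
  rw [Complex.norm_ofNat, div_lt_iff₀ (by norm_num)]
  linarith

theorem pA_ne (t) : (pA t).1 ≠ 0 := cosne_im (la t) (by rw [la_im]; exact one_ne_zero)
theorem pB_ne (t) : (pB t).1 ≠ 0 := (norm_one_trig (lb t) (lb_norm t)).2
theorem pA_bd (t) : ‖(pA t).1‖ < 4 := cos_bd (la t) (by rw [la_im]; simp)
theorem pB_bd (t) : ‖(pB t).1‖ < 4 := cos_bd (lb t) ((Complex.abs_im_le_norm _).trans (lb_norm t).le)

noncomputable def wk : ℕ → ℂ
  | 0 => x0.1⁻¹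
  | 1 => 1
  | 2 => -1
  | 3 => 0
  | (k + 4) => ((k : ℂ) + 4)⁻¹

theorem wk_bd (k : ℕ) : ‖wk (k + 4)‖ ≤ 1 / 4 := by
  have : wk (k + 4) = (((k : ℝ) + 4 : ℝ) : ℂ)⁻¹ := by simp [wk]
  rw [this, norm_inv, Complex.norm_real, Real.norm_eq_abs, abs_of_nonneg (by positivity), inv_eq_one_div]
  apply one_div_le_one_div_of_le (by norm_num)
  have : (0 : ℝ) ≤ k := by positivity
  linarith

theorem inv_ne_wk (v : Xc) (h0 : v.1 ≠ 0) (hb : ‖v.1‖ < 4) (k : ℕ) (hk : k ≠ 0) : v.1⁻¹ ≠ wk k := by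
  match k, hk with
  | 1, _ => intro h; exact v.2.1 (inv_eq_one.1 h)
  | 2, _ => intro h; exact v.2.2 (by rw [← inv_inv v.1, h]; norm_num [wk])
  | 3, _ => intro h; exact inv_ne_zero h0 h
  | (k + 4), _ =>
    intro h
    have h1 := wk_bd k
    rw [← h, norm_inv, inv_eq_one_div, one_div_le_one_div (norm_pos_iff.2 h0) (by norm_num)] at h1
    linarith

theorem x0_ne : x0.1 ≠ 0 := by simpa using pA_ne 0
theorem x0_bd : ‖x0.1‖ < 4 := by simpa using pA_bd 0

theorem wk_lt (a b : ℕ) (h : a < b) : wk a ≠ wk b := by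
  match a, b, h with
  | 0, b, h => exact inv_ne_wk x0 x0_ne x0_bd b (by omega)
  | 1, 2, _ => norm_num [wk]
  | 1, 3, _ => norm_num [wk]
  | 1, (k + 4), _ =>
    intro h
    have h1 := wk_bd k
    rw [← h] at h1; norm_num [wk] at h1
  | 2, 3, _ => norm_num [wk]
  | 2, (k + 4), _ =>
    intro h
    have h1 := wk_bd k
    rw [← h] at h1; norm_num [wk] at h1
  | 3, (k + 4), _ =>
    intro h
    have h1 : ((k : ℂ) + 4)⁻¹ = 0 := h.symm
    rw [inv_eq_zero] at h1
    have h2 : ((k + 4 : ℕ) : ℂ) = 0 := by push_cast; exact h1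
    rw [Nat.cast_eq_zero] at h2; omega
  | (l + 4), (k + 4), hlt =>
    intro h
    have h1 : ((l : ℂ) + 4)⁻¹ = ((k : ℂ) + 4)⁻¹ := h
    rw [inv_inj, add_left_inj, Nat.cast_inj] at h1
    omega

theorem wk_inj : Function.Injective wk := by
  intro a b h
  rcases lt_trichotomy a b with h1 | h1 | h1
  · exact absurd h (wk_lt _ _ h1)
  · exact h1
  · exact absurd h.symm (wk_lt _ _ h1)

variable {S : Type*} [TopologicalSpace S]

open Classical in
noncomputable def ginv (j : ℂ → S) (y : S) : ℂ := if h : ∃ x, j x = y then h.choose⁻¹ else 0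

theorem ginv_apply {j : ℂ → S} (hj : Function.Injective j) (x : ℂ) : ginv j (j x) = x⁻¹ := by
  have h : ∃ x', j x' = j x := ⟨x, rfl⟩
  unfold ginv
  rw [dif_pos h, hj h.choose_spec]

theorem ginv_out {j : ℂ → S} (y : S) (hy : y ∉ range j) : ginv j y = 0 := by
  unfold ginv; rw [dif_neg]; exact hy

theorem ginv_cont [T2Space S] {j : ℂ → S} (hj : IsOpenEmbedding j) (y : S) (hy : y ≠ j 0) : ContinuousAt (ginv j) y := by
  by_cases h : y ∈ range j
  · obtain ⟨x, rfl⟩ := h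
    have hx : x ≠ 0 := by rintro rfl; exact hy rfl
    refine (hj.continuousAt_iff (g := ginv j) (x := x)).1 ?_
    have he : ginv j ∘ j = fun x => x⁻¹ := by funext x; exact ginv_apply hj.injective x
    rw [he]
    exact continuousAt_inv₀ hx
  · rw [ContinuousAt, ginv_out y h, Metric.tendsto_nhds]
    intro ε hε
    have hc : IsClosed (j '' Metric.closedBall 0 (1 / ε)) := ((isCompact_closedBall _ _).image hj.continuous).isClosed
    filter_upwards [hc.isOpen_compl.mem_nhds (x := y) (by rintro ⟨x, -, rfl⟩; exact h ⟨x, rfl⟩)] with u hu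
    rw [dist_zero_right]
    by_cases hur : u ∈ range j
    · obtain ⟨x, rfl⟩ := hur
      rw [ginv_apply hj.injective, norm_inv]
      have : 1 / ε < ‖x‖ := by
        by_contra hle
        exact hu ⟨x, by simpa using hle, rfl⟩
      rw [inv_eq_one_div]
      exact (one_div_lt hε ((by positivity : (0 : ℝ) < 1 / ε).trans this)).1 this
    · rw [ginv_out u hur]; simpa using hε

section
variable {ι : Type*} [DecidableEq ι]

abbrev Cf (ι S : Type*) := {x : ι → S // Function.Injective x}

noncomputable def incl (z : Cf ι S) (i0 : ι) : C(Fib z.1 i0, Cf ι S) where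
  toFun x := ⟨Function.update z.1 i0 x.1, by
      intro a b hab
      by_cases ha : a = i0 <;> by_cases hb : b = i0
      · rw [ha, hb]
      · subst ha; rw [Function.update_self, Function.update_of_ne hb] at hab
        exact absurd hab (x.2 b hb)
      · subst hb; rw [Function.update_self, Function.update_of_ne ha] at hab
        exact absurd hab.symm (x.2 a ha)
      · rw [Function.update_of_ne ha, Function.update_of_ne hb] at hab
        exact z.2 hab⟩
  continuous_toFun := by
    have h : Continuous (fun x : Fib z.1 i0 => Function.update z.1 i0 x.1) :=
      continuous_const.update i0 continuous_subtype_val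
    exact h.subtype_mk _

def fb (z : Cf ι S) (i0 : ι) : Fib z.1 i0 := ⟨z.1 i0, fun _ hi h => hi (z.2 h.symm)⟩

theorem incl_fb (z : Cf ι S) (i0 : ι) : incl z i0 (fb z i0) = z := Subtype.ext (by simp [incl, fb])

theorem key3 [Finite ι] [T2Space S] [CompactSpace S] [ChartedSpace HH S] (z : Cf ι S) (i0 : ι) (hz : ∀ i, z.1 i ∈ Vs S)
    (γ : Path (fb z i0) (fb z i0)) (hγ : ∀ t, (γ t).1 ∈ Vs S)
    (g : FundamentalGroup (Fib z.1 i0) (fb z i0)) (hg : Path.Homotopic.Quotient.mk γ = g)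
    (h1 : FundamentalGroup.mapOfEq (incl z i0) (incl_fb z i0) g = 1)
    (d : FundamentalGroup (Fib z.1 i0) (fb z i0)) : d * g = g * d := by
  subst hg
  have h2 : Path.Homotopic.Quotient.mk ((γ.map (incl z i0).continuous).cast (incl_fb z i0).symm (incl_fb z i0).symm) =
      Path.Homotopic.Quotient.mk (Path.refl z) := by
    rw [FundamentalGroup.mapOfEq_apply] at h1
    exact h1
  obtain ⟨Hh⟩ := Path.Homotopic.Quotient.eq.1 h2
  let K : Set S := range (fun t => (γ t).1) ∪ range z.1
  have hK : IsClosed K := by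
    refine ((isCompact_range ?_).union (finite_range _).isCompact).isClosed
    exact continuous_subtype_val.comp γ.continuous
  obtain ⟨Ψ, p1, p2, p3, p4⟩ := shrink K hK (by
    rintro x (⟨t, rfl⟩ | ⟨i, rfl⟩)
    · exact hγ t
    · exact hz i)
  have hzf : (fun i => Ψ (z.1 i)) = z.1 := by funext i; exact p3 _ (Or.inr ⟨i, rfl⟩)
  induction d using Path.Homotopic.Quotient.ind with
  | mk δ =>
  have := key z.1 i0 (fb z i0) rfl γ δ (fun p i => Ψ ((Hh (p.2, p.1)).1 i)) ?_ ?_ ?_ ?_ ?_ ?_ ?_ ?_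
  · exact Path.Homotopic.Quotient.eq.2 this
  · refine continuous_pi fun i => p1.comp ((continuous_apply i).comp (continuous_subtype_val.comp (Hh.continuous.comp (by fun_prop))))
  · intro p a b hab; exact (Hh (p.2, p.1)).2 (p2 hab)
  · intro p i; exact p4 _
  · intro t
    simp only [ContinuousMap.HomotopyWith.apply_zero]
    show Ψ (Function.update z.1 i0 (γ t).1 i0) = _
    rw [Function.update_self]; exact p3 _ (Or.inl ⟨t, rfl⟩)
  · intro t i hi
    simp only [ContinuousMap.HomotopyWith.apply_zero]
    show Ψ (Function.update z.1 i0 (γ t).1 i) = _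
    rw [Function.update_of_ne hi]; exact p3 _ (Or.inr ⟨i, rfl⟩)
  · intro t
    simp only [ContinuousMap.HomotopyWith.apply_one]
    exact hzf
  · intro t
    simp only [Path.Homotopy.source]
    exact hzf
  · intro t
    simp only [Path.Homotopy.target]
    exact hzf

def InV (z : Cf ι S) (i0 : ι) (g : FundamentalGroup (Fib z.1 i0) (fb z i0)) : Prop :=
  ∃ γ : Path (fb z i0) (fb z i0), (Path.Homotopic.Quotient.mk γ : FundamentalGroup _ _) = g ∧ ∀ t, (γ t).1 ∈ Vs S

theorem InV.mul {z : Cf ι S} {i0 : ι} {g h} (hg : InV z i0 g) (hh : InV z i0 h) : InV z i0 (g * h) := by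
  obtain ⟨γ, rfl, h1⟩ := hg
  obtain ⟨δ, rfl, h2⟩ := hh
  refine ⟨δ.trans γ, rfl, fun t => ?_⟩
  rw [Path.trans_apply]; split_ifs
  · exact h2 _
  · exact h1 _
theorem InV.inv {z : Cf ι S} {i0 : ι} {g} (hg : InV z i0 g) : InV z i0 g⁻¹ := by
  obtain ⟨γ, rfl, h1⟩ := hg
  exact ⟨γ.symm, rfl, fun t => h1 _⟩
theorem InV.pow {z : Cf ι S} {i0 : ι} {g} (hg : InV z i0 g) (hz : z.1 i0 ∈ Vs S) (k : ℕ) : InV z i0 (g ^ k) := by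
  induction k with
  | zero => exact ⟨Path.refl _, (pow_zero g).symm, fun t => hz⟩
  | succ k ih => rw [pow_succ]; exact ih.mul hg
end

theorem main [T2Space S] [CompactSpace S] [ConnectedSpace S] [ChartedSpace HH S] (n : ℕ) (hn : 4 ≤ n) (z : Cf (Fin n) S) :
    Infinite (FundamentalGroup (Cf (Fin n) S) z ⧸ Subgroup.center (FundamentalGroup (Cf (Fin n) S) z)) := by
  have := conf_pc (S := S) n
  obtain ⟨_, j, hj, -⟩ := Vs_nonempty (S := S)
  let zs : Cf (Fin n) S := ⟨fun i => j (wk i), fun a b h => Fin.ext (wk_inj (hj.injective h))⟩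
  let i0 : Fin n := ⟨0, by omega⟩
  have hi0 : ∀ i : Fin n, i ≠ i0 → (i : ℕ) ≠ 0 := fun i hi h => hi (Fin.ext h)
  have hzs : ∀ i, zs.1 i ∈ Vs S := fun i => ⟨j, hj, _, rfl⟩
  have hne0 : ∀ x : Fib zs.1 i0, x.1 ≠ j 0 := fun x => x.2 ⟨3, by omega⟩ (by simp [i0])
  have hne1 : ∀ x : Fib zs.1 i0, x.1 ≠ j 1 := fun x => x.2 ⟨1, by omega⟩ (by simp [i0])
  have hne2 : ∀ x : Fib zs.1 i0, x.1 ≠ j (-1) := fun x => x.2 ⟨2, by omega⟩ (by simp [i0])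
  let f : C(Fib zs.1 i0, Xc) := ⟨fun x => ⟨ginv j x.1, by
      by_cases h : x.1 ∈ range j
      · obtain ⟨w, hw⟩ := h
        rw [← hw, ginv_apply hj.injective]
        constructor
        · intro h; rw [inv_eq_one] at h; exact hne1 x (by rw [← hw, h])
        · intro h
          refine hne2 x (by rw [← hw, ← inv_inv w, h]; norm_num)
      · rw [ginv_out _ h]; norm_num⟩, by
      refine Continuous.subtype_mk ?_ _
      rw [continuous_iff_continuousAt]
      intro x
      exact ContinuousAt.comp (g := ginv j) (ginv_cont hj x.1 (hne0 x)) continuous_subtype_val.continuousAt⟩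
  have hf0 : f (fb zs i0) = x0 := by
    apply Subtype.ext
    show ginv j (j x0.1⁻¹) = _
    rw [ginv_apply hj.injective, inv_inv]
  have lift : ∀ q : Path x0 x0, (∀ t, (q t).1 ≠ 0) → (∀ t, ‖(q t).1‖ < 4) →
      ∃ g, InV zs i0 g ∧ FundamentalGroup.mapOfEq f hf0 g = Path.Homotopic.Quotient.mk q := by
    intro q h0 hb
    let γ : Path (fb zs i0) (fb zs i0) := ⟨⟨fun t => ⟨j (q t).1⁻¹, fun i hi h =>
        inv_ne_wk (q t) (h0 t) (hb t) i (hi0 i hi) (hj.injective h)⟩, by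
        refine Continuous.subtype_mk (hj.continuous.comp ?_) _
        exact Continuous.inv₀ (continuous_subtype_val.comp q.continuous) h0⟩, by
        apply Subtype.ext
        show j (q 0).1⁻¹ = _
        rw [q.source]; rfl, by
        apply Subtype.ext
        show j (q 1).1⁻¹ = _
        rw [q.target]; rfl⟩
    refine ⟨Path.Homotopic.Quotient.mk γ, ⟨γ, rfl, fun t => ⟨j, hj, _, rfl⟩⟩, ?_⟩
    rw [FundamentalGroup.mapOfEq_apply]
    have : q = (γ.map f.continuous).cast hf0.symm hf0.symm := by
      ext t
      show (q t).1 = ginv j (j (q t).1⁻¹)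
      rw [ginv_apply hj.injective, inv_inv]
    conv_rhs => rw [this]
    rfl
  obtain ⟨A, hA, hA'⟩ := lift pA pA_ne pA_bd
  obtain ⟨B, hB, hB'⟩ := lift pB pB_ne pB_bd
  have hA2 : FundamentalGroup.mapOfEq f hf0 A = cA := hA'
  have hB2 : FundamentalGroup.mapOfEq f hf0 B = cB := hB'
  let Φ := FundamentalGroup.fundamentalGroupMulEquivOfPathConnected zs z
  let ic := FundamentalGroup.mapOfEq (incl zs i0) (incl_fb zs i0)
  refine infinite_of_pows (Φ (ic A)) (Φ (ic B)) ?_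
  intro k hk h
  have h' : ic A ^ k * ic B = ic B * ic A ^ k := by
    apply Φ.injective
    rw [map_mul, map_mul, map_pow]
    exact h
  have hg : InV zs i0 (A ^ k * B * (A ^ k)⁻¹ * B⁻¹) :=
    (((hA.pow (hzs i0) k).mul hB).mul (hA.pow (hzs i0) k).inv).mul hB.inv
  obtain ⟨γ, hγ, hγV⟩ := hg
  have h1 : ic (A ^ k * B * (A ^ k)⁻¹ * B⁻¹) = 1 := by
    simp only [map_mul, map_pow, map_inv, h']
    group
  have h2 := key3 zs i0 hzs γ hγV _ hγ h1 B
  have h3 := congrArg (FundamentalGroup.mapOfEq f hf0) h2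
  simp only [map_mul, map_pow, map_inv, hA2, hB2] at h3
  exact not_comm k hk h3.symm
end PB


/-- For `n ≥ 4` and any compact surface `S` (a compact topological
2-manifold, possibly with boundary, modelled on the Euclidean half-plane), the quotient
`P_n(S)/Z(P_n(S))` of the pure braid group
`P_n(S) = π₁(C_n(S))` of the configuration space `C_n(S)` of `n` ordered distinct
points in `S` by its center is infinite. -/
theorem pure_braid_group_mod_center_infinite {S : Type*} [TopologicalSpace S]
    [T2Space S] [CompactSpace S] [ConnectedSpace S]
    [ChartedSpace (EuclideanHalfSpace 2) S]
    (n : ℕ) (hn : 4 ≤ n)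
    (z : {x : Fin n → S // Function.Injective x}) :
    Infinite (FundamentalGroup {x : Fin n → S // Function.Injective x} z ⧸
      Subgroup.center (FundamentalGroup {x : Fin n → S // Function.Injective x} z)) := by
  exact PB.main n hn z
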